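/- arXiv:math/0604264 — 14 statements merged into one kernel-verified Lean document; each statement's English description precedes it below -/
import Mathlib

section
/- Let σ:[0,T]×ℝ→ℝ be jointly continuous and continuously differentiable in k, and suppose σ is an equilibrium strategy, i.e. for every (t,k)∈[0,T]×ℝ the consumption c=σ(t,k) maximizes c ↦ P₁(t,k,σ,c) over ℝ. Then the function V(t,k) := ∫ₜ^T h(s−t)·u(σ(s,K(s,t,k))) ds + h(T−t)·g(K(T,t,k)) satisfies the envelope identity u′(σ(t,k)) = ∂V/∂k(t,k) for all (t,k), and consequently V satisfies the integrated equilibrium equation (IE): V(t,k) = ∫ₜ^T h(s−t)·u(i(∂V/∂k(s,K(s,t,k)))) ds + h(T−t)·g(K(T,t,k)) for all (t,k). -/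
open MeasureTheory

/-- The first-order payoff perturbation `P₁(t,k,σ,c)` of the time-`t` decision-maker
deviating to consumption `c`, all other decision-makers applying the strategy `σ`
with flow `K` and linearized flow `R`. -/
noncomputable def P1 (h u g : ℝ → ℝ) (σ : ℝ → ℝ → ℝ) (K R : ℝ → ℝ → ℝ → ℝ)
    (T t k c : ℝ) : ℝ :=
  u c - u (σ t k) +
    ((∫ s in t..T, h (s - t) * deriv u (σ s (K s t k)) * deriv (σ s) (K s t k) * R s t k) +
      h (T - t) * deriv g (K T t k) * R T t k) * (σ t k - c)

/-- The value function `V(t,k)` associated with the strategy `σ` with flow `K`. -/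
noncomputable def valueFn (h u g : ℝ → ℝ) (σ : ℝ → ℝ → ℝ) (K : ℝ → ℝ → ℝ → ℝ)
    (T t k : ℝ) : ℝ :=
  (∫ s in t..T, h (s - t) * u (σ s (K s t k))) + h (T - t) * g (K T t k)

/-- If `σ` is an equilibrium strategy, then its value function `V`
satisfies the envelope identity `u′(σ(t,k)) = ∂V/∂k(t,k)` and the integrated
equilibrium equation (IE). -/
theorem stmt0
    (T : ℝ) (hT : 0 < T)
    (h u i g : ℝ → ℝ) (f : ℝ → ℝ → ℝ)
    -- the discount function
    (hh : ContDiff ℝ 1 h) (hh0 : h 0 = 1) (hhpos : ∀ t ≥ (0 : ℝ), 0 ≤ h t)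
    (hh' : ∀ t ≥ (0 : ℝ), deriv h t ≤ 0)
    -- the utility function and the inverse `i` of its derivative
    (hu : ContDiff ℝ 2 u) (huconc : StrictConcaveOn ℝ Set.univ u)
    (hi : ContDiff ℝ 1 i) (hinv : ∀ c x : ℝ, deriv u c = x ↔ c = i x)
    -- the production function and the terminal utility
    (hf : ContDiff ℝ 2 (Function.uncurry f))
    (hfconc : ∀ t ∈ Set.Icc (0 : ℝ) T, StrictConcaveOn ℝ Set.univ (f t))
    (hg : ContDiff ℝ 2 g)
    -- the strategy: jointly continuous, continuously differentiable in `k`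
    (σ : ℝ → ℝ → ℝ) (hσc : Continuous (Function.uncurry σ))
    (hσk : ∀ t, ContDiff ℝ 1 (σ t))
    -- the flow `K` of the strategy and its linearization `R`
    (K R : ℝ → ℝ → ℝ → ℝ)
    (hKinit : ∀ t k : ℝ, K t t k = k)
    (hKode : ∀ t k s : ℝ, HasDerivAt (fun s' => K s' t k)
      (f s (K s t k) - σ s (K s t k)) s)
    (hKk : ∀ s t k : ℝ, HasDerivAt (fun x => K s t x) (R s t k) k)
    (hRinit : ∀ t k : ℝ, R t t k = 1)
    (hRode : ∀ t k s : ℝ, HasDerivAt (fun s' => R s' t k)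
      ((deriv (f s) (K s t k) - deriv (σ s) (K s t k)) * R s t k) s)
    -- integrability of all integrals appearing
    (hint1 : ∀ t ∈ Set.Icc (0 : ℝ) T, ∀ k : ℝ,
      IntervalIntegrable (fun s => h (s - t) * u (σ s (K s t k))) volume t T)
    (hint2 : ∀ t ∈ Set.Icc (0 : ℝ) T, ∀ k : ℝ,
      IntervalIntegrable
        (fun s => h (s - t) * deriv u (σ s (K s t k)) * deriv (σ s) (K s t k) * R s t k)
        volume t T)
    -- differentiation under the integral sign in `k` is assumed valid
    (hVk : ∀ t ∈ Set.Icc (0 : ℝ) T, ∀ k : ℝ,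
      HasDerivAt (fun x => valueFn h u g σ K T t x)
        ((∫ s in t..T, h (s - t) * deriv u (σ s (K s t k)) * deriv (σ s) (K s t k) * R s t k) +
          h (T - t) * deriv g (K T t k) * R T t k) k)
    -- `σ` is an equilibrium strategy: `σ t k` maximizes `c ↦ P₁(t,k,σ,c)`
    (heq : ∀ t ∈ Set.Icc (0 : ℝ) T, ∀ k c : ℝ,
      P1 h u g σ K R T t k c ≤ P1 h u g σ K R T t k (σ t k)) :
    ∀ t ∈ Set.Icc (0 : ℝ) T, ∀ k : ℝ,
      deriv u (σ t k) = deriv (fun x => valueFn h u g σ K T t x) k ∧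
      valueFn h u g σ K T t k =
        (∫ s in t..T,
          h (s - t) * u (i (deriv (fun x => valueFn h u g σ K T s x) (K s t k)))) +
          h (T - t) * g (K T t k) := by
  have env : ∀ t ∈ Set.Icc (0 : ℝ) T, ∀ k : ℝ,
      deriv u (σ t k) = deriv (fun x => valueFn h u g σ K T t x) k := by
    intro t ht k
    rw [(hVk t ht k).deriv]
    have hd : HasDerivAt u (deriv u (σ t k)) (σ t k) :=
      ((hu.differentiable (by norm_num)) (σ t k)).hasDerivAt
    have hmax : IsLocalMax (fun c => P1 h u g σ K R T t k c) (σ t k) :=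
      Filter.Eventually.of_forall (fun c => heq t ht k c)
    unfold P1 at hmax
    generalize ((∫ s in t..T, h (s - t) * deriv u (σ s (K s t k)) * deriv (σ s) (K s t k)
      * R s t k) + h (T - t) * deriv g (K T t k) * R T t k) = A at hmax ⊢
    have h2 := (hd.sub_const (u (σ t k))).add
      (((hasDerivAt_id (σ t k)).const_sub (σ t k)).const_mul A)
    have h3 := hmax.hasDerivAt_eq_zero h2
    linarith
  intro t ht k
  refine ⟨env t ht k, ?_⟩
  rw [valueFn]
  congr 1
  apply intervalIntegral.integral_congr
  intro s hs
  rw [Set.uIcc_of_le ht.2] at hs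
  have e := (hinv _ _).1 (env s ⟨ht.1.trans hs.1, hs.2⟩ (K s t k))
  simp only
  rw [← e]
end

section
/- Let V:[0,T]×ℝ→ℝ be twice continuously differentiable, set σ := i∘(∂V/∂k), and let K be the flow of σ, satisfying in addition the semigroup property K(x,s,K(s,t,k)) = K(x,t,k) for 0≤t≤s≤x≤T. Then V satisfies the integrated equilibrium equation (IE) — V(t,k) = ∫ₜ^T h(s−t)·u(σ(s,K(s,t,k))) ds + h(T−t)·g(K(T,t,k)) for all (t,k) — if and only if V satisfies the differentiated equilibrium equation (DE): ∂V/∂t(t,k) + ∫ₜ^T h′(s−t)·u(σ(s,K(s,t,k))) ds + h′(T−t)·g(K(T,t,k)) + ũ(∂V/∂k(t,k)) + ∂V/∂k(t,k)·f(t,k) = 0 for all (t,k)∈[0,T]×ℝ, together with the boundary condition V(T,k) = g(k) for all k. -/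
open MeasureTheory

/-- Uniqueness of global solutions of a scalar ODE with `C¹` right-hand side. -/
theorem flow_unique (T : ℝ) (v : ℝ × ℝ → ℝ) (hv : ContDiff ℝ 1 v)
    (a b : ℝ → ℝ) (ha : ∀ s, HasDerivAt a (v (s, a s)) s)
    (hb : ∀ s, HasDerivAt b (v (s, b s)) s) (s : ℝ) (hs : s ∈ Set.Icc 0 T)
    (hab : a s = b s) : ∀ x ∈ Set.Icc 0 T, a x = b x := by
  have hac : Continuous a := continuous_iff_continuousAt.2 fun s => (ha s).continuousAt
  have hbc : Continuous b := continuous_iff_continuousAt.2 fun s => (hb s).continuousAt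
  obtain ⟨A, hA⟩ := (isCompact_Icc (a := (0 : ℝ) - 1) (b := T + 1)).exists_bound_of_continuousOn
    hac.continuousOn
  obtain ⟨B, hB⟩ := (isCompact_Icc (a := (0 : ℝ) - 1) (b := T + 1)).exists_bound_of_continuousOn
    hbc.continuousOn
  set R := max A B
  have hcv : Convex ℝ (Set.Icc ((0 : ℝ) - 1) (T + 1) ×ˢ Set.Icc (-R) R) :=
    (convex_Icc _ _).prod (convex_Icc _ _)
  have hcp : IsCompact (Set.Icc ((0 : ℝ) - 1) (T + 1) ×ˢ Set.Icc (-R) R) :=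
    isCompact_Icc.prod isCompact_Icc
  obtain ⟨L, hL⟩ := hv.contDiffOn.exists_lipschitzOnWith (by norm_num) hcv hcp
  have hLip : ∀ t ∈ Set.Ioo ((0 : ℝ) - 1) (T + 1),
      LipschitzOnWith L (fun y => v (t, y)) (Set.Icc (-R) R) := by
    intro t ht y hy z hz
    have := hL (x := (t, y)) ⟨⟨ht.1.le, ht.2.le⟩, hy⟩ (y := (t, z)) ⟨⟨ht.1.le, ht.2.le⟩, hz⟩
    simpa [Prod.edist_eq] using this
  have key := ODE_solution_unique_of_mem_Ioo (v := fun t y => v (t, y)) (s := fun _ => Set.Icc (-R) R)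
    (K := L) (f := a) (g := b) (a := 0 - 1) (b := T + 1) (t₀ := s) hLip
    ⟨by linarith [hs.1], by linarith [hs.2]⟩
    (fun t ht => ⟨ha t, abs_le.1 ((hA t ⟨ht.1.le, ht.2.le⟩).trans (le_max_left _ _))⟩)
    (fun t ht => ⟨hb t, abs_le.1 ((hB t ⟨ht.1.le, ht.2.le⟩).trans (le_max_right _ _))⟩) hab
  intro x hx
  exact key ⟨by linarith [hx.1], by linarith [hx.2]⟩

/-- For a `C²` function `V` with induced strategy `σ = i ∘ ∂V/∂k` and
flow `K` (satisfying the semigroup property), the integrated equilibrium equation (IE)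
holds if and only if the differentiated equilibrium equation (DE) holds together with
the boundary condition `V(T,k) = g(k)`.  Here `ũ(x) = u(i(x)) − x·i(x)` is the
Legendre–Fenchel transform of `u`. -/
theorem stmt2
    (T : ℝ) (hT : 0 < T)
    (h u i g : ℝ → ℝ) (f : ℝ → ℝ → ℝ)
    -- the discount function
    (hh : ContDiff ℝ 1 h) (hh0 : h 0 = 1) (hhpos : ∀ t ≥ (0 : ℝ), 0 ≤ h t)
    (hh' : ∀ t ≥ (0 : ℝ), deriv h t ≤ 0)
    -- the utility function and the inverse `i` of its derivative
    (hu : ContDiff ℝ 2 u) (huconc : StrictConcaveOn ℝ Set.univ u)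
    (hi : ContDiff ℝ 1 i) (hinv : ∀ c x : ℝ, deriv u c = x ↔ c = i x)
    -- the production function and the terminal utility
    (hf : ContDiff ℝ 2 (Function.uncurry f))
    (hfconc : ∀ t ∈ Set.Icc (0 : ℝ) T, StrictConcaveOn ℝ Set.univ (f t))
    (hg : ContDiff ℝ 2 g)
    -- the value function `V` and the induced strategy `σ = i ∘ ∂V/∂k`
    (V : ℝ → ℝ → ℝ) (hV : ContDiff ℝ 2 (Function.uncurry V))
    (σ : ℝ → ℝ → ℝ) (hσ : ∀ t k : ℝ, σ t k = i (deriv (V t) k))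
    -- the flow `K` of the strategy, with the semigroup property
    (K : ℝ → ℝ → ℝ → ℝ)
    (hKinit : ∀ t k : ℝ, K t t k = k)
    (hKode : ∀ t k s : ℝ, HasDerivAt (fun s' => K s' t k)
      (f s (K s t k) - σ s (K s t k)) s)
    (hsemi : ∀ t s x k : ℝ, 0 ≤ t → t ≤ s → s ≤ x → x ≤ T →
      K x s (K s t k) = K x t k)
    -- all the integrals appearing are assumed finite
    (hint1 : ∀ t ∈ Set.Icc (0 : ℝ) T, ∀ k : ℝ,
      IntervalIntegrable (fun s => h (s - t) * u (σ s (K s t k))) volume t T)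
    (hint2 : ∀ t ∈ Set.Icc (0 : ℝ) T, ∀ k : ℝ,
      IntervalIntegrable (fun s => deriv h (s - t) * u (σ s (K s t k))) volume t T)
    -- interchange of differentiation and integration is assumed valid
    (hLeibniz : ∀ t ∈ Set.Icc (0 : ℝ) T, ∀ k : ℝ, ∀ s ∈ Set.Icc (0 : ℝ) T,
      HasDerivAt (fun s' => ∫ x in s'..T, h (x - s') * u (σ x (K x t k)))
        (-(h 0 * u (σ s (K s t k))) -
          ∫ x in s..T, deriv h (x - s) * u (σ x (K x t k))) s) :
    -- (IE)
    (∀ t ∈ Set.Icc (0 : ℝ) T, ∀ k : ℝ,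
      V t k = (∫ s in t..T, h (s - t) * u (σ s (K s t k))) + h (T - t) * g (K T t k))
    ↔
    -- (DE) together with the boundary condition (BC)
    ((∀ t ∈ Set.Icc (0 : ℝ) T, ∀ k : ℝ,
        deriv (fun s => V s k) t
          + (∫ s in t..T, deriv h (s - t) * u (σ s (K s t k)))
          + deriv h (T - t) * g (K T t k)
          + (u (i (deriv (V t) k)) - deriv (V t) k * i (deriv (V t) k))
          + deriv (V t) k * f t k = 0) ∧
      (∀ k : ℝ, V T k = g k)) := by
  -- partial derivatives of `V`
  have hVd : Differentiable ℝ (Function.uncurry V) := hV.differentiable (by norm_num)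
  have hVk : ∀ t k, deriv (V t) k = fderiv ℝ (Function.uncurry V) (t, k) (0, 1) := by
    intro t k
    have h1 : HasDerivAt (fun k' : ℝ => (t, k')) ((0 : ℝ), (1 : ℝ)) k :=
      (hasDerivAt_const k t).prodMk (hasDerivAt_id k)
    exact ((hVd (t, k)).hasFDerivAt.comp_hasDerivAt k h1).deriv
  have hVt : ∀ t k, deriv (fun s => V s k) t = fderiv ℝ (Function.uncurry V) (t, k) (1, 0) := by
    intro t k
    have h1 : HasDerivAt (fun s : ℝ => (s, k)) ((1 : ℝ), (0 : ℝ)) t :=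
      (hasDerivAt_id t).prodMk (hasDerivAt_const t k)
    exact ((hVd (t, k)).hasFDerivAt.comp_hasDerivAt t h1).deriv
  -- the vector field is `C¹`
  have hv : ContDiff ℝ 1 (fun p : ℝ × ℝ => f p.1 p.2 - σ p.1 p.2) := by
    have h1 : ContDiff ℝ 1 (fun p : ℝ × ℝ => fderiv ℝ (Function.uncurry V) p (0, 1)) :=
      (hV.fderiv_right (m := 1) (by norm_num)).clm_apply contDiff_const
    have h2 : ContDiff ℝ 1 (fun p : ℝ × ℝ => σ p.1 p.2) := by
      have : (fun p : ℝ × ℝ => σ p.1 p.2)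
          = fun p => i (fderiv ℝ (Function.uncurry V) p (0, 1)) := by
        funext p; rw [hσ, hVk]
      rw [this]; exact hi.comp h1
    have h3 : ContDiff ℝ 1 (Function.uncurry f) := hf.of_le (by norm_num)
    exact ContDiff.sub h3 h2
  -- full semigroup property
  have hflow := flow_unique T _ hv
  have hKc : ∀ t k, Continuous fun s => K s t k := fun t k =>
    continuous_iff_continuousAt.2 fun s => (hKode t k s).continuousAt
  have hsemi' : ∀ t s k x, s ∈ Set.Icc 0 T → x ∈ Set.Icc 0 T → K x s (K s t k) = K x t k := by
    intro t s k x hs hx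
    exact hflow (fun x => K x s (K s t k)) (fun x => K x t k) (fun x => hKode _ _ x)
      (fun x => hKode _ _ x) s hs (hKinit _ _) x hx
  -- derivative along the flow
  have hφ : ∀ t k s, HasDerivAt (fun s => V s (K s t k))
      (deriv (fun r => V r (K s t k)) s
        + deriv (V s) (K s t k) * (f s (K s t k) - σ s (K s t k))) s := by
    intro t k s
    have h1 := (hasDerivAt_id s).prodMk (hKode t k s)
    have h2 := (hVd (s, K s t k)).hasFDerivAt.comp_hasDerivAt (f := fun s => (s, K s t k)) s h1
    refine HasDerivAt.congr_deriv (h2) ?_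
    rw [hVt, hVk]
    have : ((1 : ℝ), f s (K s t k) - σ s (K s t k))
        = (1, 0) + (f s (K s t k) - σ s (K s t k)) • ((0 : ℝ), (1 : ℝ)) := by simp
    rw [this, map_add, map_smul, smul_eq_mul, mul_comm]
  have hW : ∀ t ∈ Set.Icc (0 : ℝ) T, ∀ k, ∀ s ∈ Set.Icc (0 : ℝ) T,
      HasDerivAt (fun s => (∫ x in s..T, h (x - s) * u (σ x (K x t k))) + h (T - s) * g (K T t k))
      ((-(u (σ s (K s t k))) - ∫ x in s..T, deriv h (x - s) * u (σ x (K x t k)))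
        - deriv h (T - s) * g (K T t k)) s := by
    intro t ht k s hs
    have h1 := hLeibniz t ht k s hs
    have h2 : HasDerivAt h (deriv h (T - s)) (T - s) :=
      (hh.differentiable (by norm_num) _).hasDerivAt
    have h3 := (h2.comp s ((hasDerivAt_id s).const_sub T)).mul_const (g (K T t k))
    refine HasDerivAt.congr_deriv (h1.add h3) ?_
    rw [hh0]; ring
  have hTm : T ∈ Set.Icc (0 : ℝ) T := ⟨hT.le, le_rfl⟩
  have hcongr : ∀ (a : ℝ → ℝ) t k s, s ∈ Set.Icc (0 : ℝ) T →
      (∫ x in s..T, a (x - s) * u (σ x (K x s (K s t k))))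
        = ∫ x in s..T, a (x - s) * u (σ x (K x t k)) := by
    intro a t k s hs
    apply intervalIntegral.integral_congr
    intro x hx
    rw [Set.uIcc_of_le hs.2] at hx
    simp only
    rw [hsemi' t s k x hs ⟨hs.1.trans hx.1, hx.2⟩]
  constructor
  · intro hIE
    refine ⟨fun t ht k => ?_, fun k => ?_⟩
    · have heq : Set.EqOn (fun s => V s (K s t k))
          (fun s => (∫ x in s..T, h (x - s) * u (σ x (K x t k))) + h (T - s) * g (K T t k))
          (Set.Icc 0 T) := by
        intro s hs
        simp only
        rw [hIE s hs, hcongr h t k s hs, hsemi' t s k T hs hTm]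
      have hd1 := (hφ t k t).hasDerivWithinAt (s := Set.Icc 0 T)
      have hd2 := ((hW t ht k t ht).hasDerivWithinAt (s := Set.Icc 0 T)).congr heq (heq ht)
      have := (uniqueDiffOn_Icc hT t ht).eq_deriv _ hd1 hd2
      rw [hKinit, hσ] at this
      linarith
    · have := hIE T hTm k
      simpa [hKinit, hh0] using this
  · rintro ⟨hDE, hBC⟩ t ht k
    have hz : ∀ s ∈ Set.Icc (0 : ℝ) T, HasDerivAt (fun s => V s (K s t k)
        - ((∫ x in s..T, h (x - s) * u (σ x (K x t k))) + h (T - s) * g (K T t k))) 0 s := by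
      intro s hs
      refine HasDerivAt.congr_deriv ((hφ t k s).sub (hW t ht k s hs)) ?_
      have := hDE s hs (K s t k)
      rw [hcongr (deriv h) t k s hs, hsemi' t s k T hs hTm] at this
      rw [hσ s (K s t k)]
      linarith
    have hc := constant_of_has_deriv_right_zero (a := 0) (b := T)
      (fun s hs => (hz s hs).continuousAt.continuousWithinAt)
      (fun s hs => (hz s ⟨hs.1, hs.2.le⟩).hasDerivWithinAt)
    have h1 := hc t ht
    have h2 := hc T hTm
    simp only [hKinit] at h1
    simp only [intervalIntegral.integral_same, sub_self, hh0, hBC] at h2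
    linarith
end

section
/- Let r, w, λ:[0,∞)→ℝ be continuous, and assume that for every t≥0 the integral W(t) := ∫ₜ^∞ exp(−∫ₜ^u r(x)dx)·w(u) du converges. Fix t≥0 and k∈ℝ, and define K(s) := exp(∫ₜ^s (r(x)−λ(x))dx)·(k + W(t)) − W(s) for s≥t. Then K(t)=k and K solves the ordinary differential equation dK/ds = w(s) + r(s)·K(s) − λ(s)·(K(s) + W(s)) for all s≥t; that is, K is the flow of the consumption-saving dynamics under the strategy σ(s,k) = λ(s)·(k + W(s)). -/
open MeasureTheory

/-- In the consumption–saving problem with interest rate `r`, wage `w`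
and propensity to consume `λ`, the function
`K(s) = exp(∫ₜ^s (r−λ)) · (k + W(t)) − W(s)`, where `W(t)` is the present value at
time `t` of future wages, satisfies `K(t) = k` and solves
`dK/ds = w(s) + r(s)·K(s) − λ(s)·(K(s) + W(s))`; i.e. `K` is the flow of the
consumption-saving dynamics under the strategy `σ(s,k) = λ(s)·(k + W(s))`. -/
theorem stmt4
    (r w lam : ℝ → ℝ)
    (hr : Continuous r) (hw : Continuous w) (hlam : Continuous lam)
    (W : ℝ → ℝ)
    (hWdef : ∀ t : ℝ, W t = ∫ u in Set.Ioi t, Real.exp (-(∫ x in t..u, r x)) * w u)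
    (hWint : ∀ t ≥ (0 : ℝ),
      IntegrableOn (fun u => Real.exp (-(∫ x in t..u, r x)) * w u) (Set.Ioi t))
    (t k : ℝ) (ht : 0 ≤ t)
    (K : ℝ → ℝ)
    (hK : ∀ s : ℝ, K s = Real.exp (∫ x in t..s, (r x - lam x)) * (k + W t) - W s) :
    K t = k ∧
    ∀ s ≥ t, HasDerivAt K (w s + r s * K s - lam s * (K s + W s)) s := by
  have hRd : ∀ a s : ℝ, ∀ f : ℝ → ℝ, Continuous f →
      HasDerivAt (fun s => ∫ x in a..s, f x) (f s) s := fun a s f hf =>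
    (hf.integral_hasStrictDerivAt a s).hasDerivAt
  have hRc : Continuous (fun s => ∫ x in (0:ℝ)..s, r x) :=
    continuous_iff_continuousAt.2 fun s => (hRd 0 s r hr).continuousAt
  have hgc : Continuous (fun u => Real.exp (-(∫ x in (0:ℝ)..u, r x)) * w u) := by
    fun_prop
  have hg0 := hWint 0 le_rfl
  have hgs : ∀ s, IntegrableOn (fun u => Real.exp (-(∫ x in (0:ℝ)..u, r x)) * w u)
      (Set.Ioi s) := by
    intro s
    refine ((hgc.integrableOn_Icc (a := s) (b := 0)).union hg0).mono_set ?_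
    intro x hx
    rcases le_or_gt x 0 with h | h
    · exact Or.inl ⟨le_of_lt hx, h⟩
    · exact Or.inr h
  have hW : ∀ s, W s = Real.exp (∫ x in (0:ℝ)..s, r x) *
      (W 0 - ∫ u in (0:ℝ)..s, Real.exp (-(∫ x in (0:ℝ)..u, r x)) * w u) := by
    intro s
    have h1 := intervalIntegral.integral_interval_add_Ioi hg0 (hgs s)
    rw [hWdef s, hWdef 0, ← h1, add_sub_cancel_left, ← integral_const_mul]
    congr 1
    ext u
    rw [← mul_assoc, ← Real.exp_add]
    congr 2
    rw [← intervalIntegral.integral_interval_sub_left (hr.intervalIntegrable 0 u)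
      (hr.intervalIntegrable 0 s)]
    ring
  have hWd : ∀ s, HasDerivAt W (r s * W s - w s) s := by
    intro s
    have h := (hRd 0 s r hr).exp.mul ((hRd 0 s _ hgc).const_sub (W 0))
    have h2 := h.congr_of_eventuallyEq (f₁ := W) (Filter.Eventually.of_forall hW)
    refine h2.congr_deriv ?_
    rw [hW s]
    have h3 : Real.exp (∫ x in (0:ℝ)..s, r x) * Real.exp (-(∫ x in (0:ℝ)..s, r x)) = 1 := by
      rw [← Real.exp_add]; simp
    linear_combination (-w s) * h3
  refine ⟨by rw [hK]; simp, fun s _ => ?_⟩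
  have h := ((hRd t s _ (hr.sub hlam)).exp.mul_const (k + W t)).sub (hWd s)
  have h2 := h.congr_of_eventuallyEq (f₁ := K) (Filter.Eventually.of_forall hK)
  refine h2.congr_deriv ?_
  rw [hK s]; simp only [Pi.sub_apply]
  ring
end

section
/- Let γ>0 with γ≠1, let h be a discount function, let r, w:[0,∞)→ℝ be continuous with W(t) := ∫ₜ^∞ exp(−∫ₜ^u r(x)dx)·w(u) du convergent for every t, and let λ:[0,∞)→(0,∞) be a continuous solution of equation (Recursion), all integrals being finite. Define σ(t,k) := λ(t)·(k+W(t)), V(t,k) := λ(t)^{−γ}·(k+W(t))^{1−γ}/(1−γ), and K(s,t,k) := exp(∫ₜ^s (r(x)−λ(x))dx)·(k+W(t)) − W(s). Then for every t≥0 and every k with k+W(t)>0: (i) ∂V/∂k(t,k) = σ(t,k)^{−γ}, i.e. ∂V/∂k(t,k) = u′(σ(t,k)) for the CRRA utility u(c)=c^{1−γ}/(1−γ); and (ii) V satisfies the integrated equilibrium equation V(t,k) = ∫ₜ^∞ h(s−t)·σ(s,K(s,t,k))^{1−γ}/(1−γ) ds. -/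
open MeasureTheory

/-- For CRRA utility `u(c) = c^{1−γ}/(1−γ)` (`γ > 0`, `γ ≠ 1`), if
`λ` is a positive continuous solution of equation (Recursion), then the value function
`V(t,k) = λ(t)^{−γ}·(k+W(t))^{1−γ}/(1−γ)` of the strategy `σ(t,k) = λ(t)·(k+W(t))`
satisfies the envelope identity `∂V/∂k = σ^{−γ} = u′(σ)` and the integrated
equilibrium equation. -/
theorem stmt5
    (γ : ℝ) (hγ : 0 < γ) (hγ1 : γ ≠ 1)
    -- the discount function
    (h : ℝ → ℝ) (hh : ContDiff ℝ 1 h) (hh0 : h 0 = 1)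
    (hhpos : ∀ t ≥ (0 : ℝ), 0 ≤ h t) (hh' : ∀ t ≥ (0 : ℝ), deriv h t ≤ 0)
    (hhlim : Filter.Tendsto h Filter.atTop (nhds 0))
    -- interest rate, wage, propensity to consume
    (r w lam : ℝ → ℝ) (hr : Continuous r) (hw : Continuous w)
    (hlam : Continuous lam) (hlampos : ∀ t ≥ (0 : ℝ), 0 < lam t)
    -- present value of future wages
    (W : ℝ → ℝ)
    (hWdef : ∀ t : ℝ, W t = ∫ u in Set.Ioi t, Real.exp (-(∫ x in t..u, r x)) * w u)
    (hWint : ∀ t ≥ (0 : ℝ),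
      IntegrableOn (fun u => Real.exp (-(∫ x in t..u, r x)) * w u) (Set.Ioi t))
    -- `λ` solves equation (Recursion), all integrals being finite
    (hrecint : ∀ t ≥ (0 : ℝ),
      IntegrableOn
        (fun s => lam s ^ (1 - γ) *
          Real.exp (-(1 - γ) * ∫ u in t..s, (lam u - r u)) * h (s - t)) (Set.Ioi t))
    (hrec : ∀ t ≥ (0 : ℝ),
      lam t = (∫ s in Set.Ioi t, lam s ^ (1 - γ) *
        Real.exp (-(1 - γ) * ∫ u in t..s, (lam u - r u)) * h (s - t)) ^ (-(1 / γ)))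
    -- the strategy, its value function and its flow
    (σ : ℝ → ℝ → ℝ) (hσ : ∀ t k : ℝ, σ t k = lam t * (k + W t))
    (V : ℝ → ℝ → ℝ) (hV : ∀ t k : ℝ, V t k = lam t ^ (-γ) * (k + W t) ^ (1 - γ) / (1 - γ))
    (K : ℝ → ℝ → ℝ → ℝ)
    (hK : ∀ s t k : ℝ,
      K s t k = Real.exp (∫ x in t..s, (r x - lam x)) * (k + W t) - W s)
    -- the integral in the integrated equilibrium equation is finite
    (hIEint : ∀ t ≥ (0 : ℝ), ∀ k : ℝ,
      IntegrableOn (fun s => h (s - t) * σ s (K s t k) ^ (1 - γ) / (1 - γ)) (Set.Ioi t)) :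
    ∀ t ≥ (0 : ℝ), ∀ k : ℝ, 0 < k + W t →
      -- (i) envelope identity, `∂V/∂k(t,k) = σ(t,k)^{−γ} = u′(σ(t,k))`
      deriv (fun x => V t x) k = σ t k ^ (-γ) ∧
      deriv (fun x => V t x) k = deriv (fun c => c ^ (1 - γ) / (1 - γ)) (σ t k) ∧
      -- (ii) integrated equilibrium equation
      V t k = ∫ s in Set.Ioi t, h (s - t) * σ s (K s t k) ^ (1 - γ) / (1 - γ) := by
  intro t ht k hk
  have hlt := hlampos t ht
  have h1 : (1 - γ) ≠ 0 := sub_ne_zero.mpr (Ne.symm hγ1)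
  have hσpos : 0 < σ t k := by rw [hσ]; positivity
  have hu : ∀ c : ℝ, 0 < c →
      HasDerivAt (fun c : ℝ => c ^ (1 - γ) / (1 - γ)) (c ^ (-γ)) c := by
    intro c hc
    have := (Real.hasDerivAt_rpow_const (x := c) (p := 1 - γ) (Or.inl hc.ne')).div_const (1 - γ)
    rw [show 1 - γ - 1 = -γ by ring, mul_div_cancel_left₀ _ h1] at this
    exact this
  have hVd : deriv (fun x => V t x) k = σ t k ^ (-γ) := by
    have e : (fun x => V t x) =
        fun x => lam t ^ (-γ) * ((x + W t) ^ (1 - γ) / (1 - γ)) := by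
      funext x
      rw [hV, mul_div_assoc]
    rw [e, hσ, Real.mul_rpow hlt.le hk.le]
    have h2 := HasDerivAt.comp_add_const k (W t) (hu (k + W t) hk)
    exact (h2.const_mul (lam t ^ (-γ))).deriv
  refine ⟨hVd, ?_, ?_⟩
  · rw [hVd, (hu _ hσpos).deriv]
  · have hI : lam t ^ (-γ) = ∫ s in Set.Ioi t, lam s ^ (1 - γ) *
        Real.exp (-(1 - γ) * ∫ u in t..s, (lam u - r u)) * h (s - t) := by
      have hnn : 0 ≤ ∫ s in Set.Ioi t, lam s ^ (1 - γ) *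
          Real.exp (-(1 - γ) * ∫ u in t..s, (lam u - r u)) * h (s - t) := by
        refine setIntegral_nonneg measurableSet_Ioi ?_
        intro s hs
        have hs' : t < s := hs
        have := hlampos s (by linarith)
        have := hhpos (s - t) (by linarith)
        positivity
      conv_lhs => rw [hrec t ht]
      rw [← Real.rpow_mul hnn, show -(1 / γ) * -γ = 1 by field_simp, Real.rpow_one]
    rw [hV, hI, mul_div_assoc, ← integral_mul_const]
    refine setIntegral_congr_fun measurableSet_Ioi ?_
    intro s hs
    have hs' : t < s := hs
    have hls := hlampos s (by linarith)
    have e1 : ∫ x in t..s, (r x - lam x) = -∫ u in t..s, (lam u - r u) := by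
      rw [← intervalIntegral.integral_neg]
      simp
    simp only []
    rw [hσ, hK, sub_add_cancel, Real.mul_rpow hls.le (by positivity),
      Real.mul_rpow (Real.exp_pos _).le hk.le, ← Real.exp_mul, e1,
      show (-∫ u in t..s, (lam u - r u)) * (1 - γ)
        = -(1 - γ) * ∫ u in t..s, (lam u - r u) by ring]
    ring
end

section
/- Let γ>0, ρ>0, and let r:[0,∞)→ℝ be continuous. Define E(t) := exp[(1/γ)·∫₀^t ((1−γ)r(s)−ρ) ds], and assume ∫₀^∞ E(s) ds < ∞. Then the function λ̄(t) := E(t)/∫ₜ^∞ E(s) ds is positive and solves equation (Recursion) with the exponential discount function h(s)=e^{−ρs}; in particular, all the integrals appearing in (Recursion) for λ̄ are finite. -/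
open MeasureTheory

/-- With exponential discounting `h(s) = e^{−ρs}`, the function
`λ̄(t) = E(t) / ∫ₜ^∞ E(s) ds`, where `E(t) = exp[(1/γ)·∫₀^t ((1−γ)r(s)−ρ) ds]`,
is positive and solves equation (Recursion); in particular all the integrals
appearing in (Recursion) for `λ̄` are finite. -/
theorem stmt6
    (γ ρ : ℝ) (hγ : 0 < γ) (hρ : 0 < ρ)
    (r : ℝ → ℝ) (hr : Continuous r)
    (E : ℝ → ℝ)
    (hE : ∀ t : ℝ, E t = Real.exp ((1 / γ) * ∫ s in (0:ℝ)..t, ((1 - γ) * r s - ρ)))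
    (hEint : IntegrableOn E (Set.Ioi 0))
    (lamBar : ℝ → ℝ)
    (hlamBar : ∀ t : ℝ, lamBar t = E t / ∫ s in Set.Ioi t, E s) :
    (∀ t ≥ (0 : ℝ), 0 < lamBar t) ∧
    (∀ t ≥ (0 : ℝ),
      IntegrableOn
        (fun s => lamBar s ^ (1 - γ) *
          Real.exp (-(1 - γ) * ∫ u in t..s, (lamBar u - r u)) *
          Real.exp (-ρ * (s - t))) (Set.Ioi t)) ∧
    (∀ t ≥ (0 : ℝ),
      lamBar t = (∫ s in Set.Ioi t, lamBar s ^ (1 - γ) *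
        Real.exp (-(1 - γ) * ∫ u in t..s, (lamBar u - r u)) *
        Real.exp (-ρ * (s - t))) ^ (-(1 / γ))) := by
  set G : ℝ → ℝ := fun s => (1 - γ) * r s - ρ with hG
  have hGc : Continuous G := by fun_prop
  have hEpos : ∀ t, 0 < E t := fun t => by rw [hE]; exact Real.exp_pos _
  have hElog : ∀ t, Real.log (E t) = (1 / γ) * ∫ s in (0:ℝ)..t, G s := fun t => by
    rw [hE, Real.log_exp]
  have hEc : Continuous E := by
    have h1 : Continuous fun t => ∫ s in (0:ℝ)..t, G s :=
      intervalIntegral.continuous_primitive (fun a b => hGc.intervalIntegrable a b) 0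
    have h2 : E = fun t => Real.exp ((1 / γ) * ∫ s in (0:ℝ)..t, G s) := funext hE
    rw [h2]
    fun_prop
  have hEi : ∀ t, IntegrableOn E (Set.Ioi t) := by
    intro t
    have h1 : IntegrableOn E (Set.Icc t 0) := hEc.continuousOn.integrableOn_Icc
    refine (h1.union hEint).mono_set ?_
    intro x hx
    rcases le_or_gt x 0 with h | h
    · exact Or.inl ⟨le_of_lt hx, h⟩
    · exact Or.inr h
  set I : ℝ → ℝ := fun t => ∫ s in Set.Ioi t, E s with hI
  have hIpos : ∀ t, 0 < I t := by
    intro t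
    refine (setIntegral_pos_iff_support_of_nonneg_ae
      (Filter.Eventually.of_forall fun x => (hEpos x).le) (hEi t)).2 ?_
    have : Function.support E = Set.univ := by
      ext x; simp [(hEpos x).ne']
    simp [this]
  have hIeq : ∀ t, I t = I 0 - ∫ s in (0:ℝ)..t, E s := by
    intro t
    have := intervalIntegral.integral_Ioi_sub_Ioi' (hEi 0) (hEi t)
    simp only [hI]
    linarith
  have hIder : ∀ t, HasDerivAt I (-E t) t := by
    intro t
    have h1 : HasDerivAt (fun t => ∫ s in (0:ℝ)..t, E s) (E t) t :=
      intervalIntegral.integral_hasDerivAt_right (hEc.intervalIntegrable _ _)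
        hEc.stronglyMeasurable.stronglyMeasurableAtFilter hEc.continuousAt
    have h2 := h1.const_sub (I 0)
    rwa [← funext hIeq] at h2
  have hIc : Continuous I := continuous_iff_continuousAt.2 fun t => (hIder t).continuousAt
  have hlam : ∀ t, lamBar t = E t / I t := hlamBar
  have hlamc : Continuous lamBar := by
    rw [funext hlam]
    exact hEc.div hIc fun t => (hIpos t).ne'
  have hlampos : ∀ t, 0 < lamBar t := fun t => by
    rw [hlam]; exact div_pos (hEpos t) (hIpos t)
  have hlamlog : ∀ t, Real.log (lamBar t) = Real.log (E t) - Real.log (I t) := fun t => by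
    rw [hlam, Real.log_div (hEpos t).ne' (hIpos t).ne']
  have hlamint : ∀ t s, ∫ u in t..s, lamBar u = Real.log (I t) - Real.log (I s) := by
    intro t s
    have := intervalIntegral.integral_eq_sub_of_hasDerivAt (a := t) (b := s)
      (f := fun u => - Real.log (I u)) (f' := lamBar)
      (fun x _ => by
        have := ((hIder x).log (hIpos x).ne').neg
        rw [hlam]
        have e : E x / I x = -(-E x / I x) := by ring
        rw [e]
        exact this) (hlamc.intervalIntegrable _ _)
    rw [this]; ring
  have hrint : ∀ t s, (1 - γ) * (∫ u in t..s, r u) - ρ * (s - t)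
      = γ * (Real.log (E s) - Real.log (E t)) := by
    intro t s
    have h1 : ∫ u in t..s, G u = (1 - γ) * (∫ u in t..s, r u) - ρ * (s - t) := by
      simp only [hG]
      have hc : Continuous fun u => (1 - γ) * r u := continuous_const.mul hr
      have hc' : Continuous fun _ : ℝ => ρ := continuous_const
      rw [intervalIntegral.integral_sub (hc.intervalIntegrable _ _)
        (hc'.intervalIntegrable _ _), intervalIntegral.integral_const_mul, intervalIntegral.integral_const]
      simp; ring
    have h2 := intervalIntegral.integral_interval_sub_left
      (hGc.intervalIntegrable (μ := volume) 0 s) (hGc.intervalIntegrable 0 t)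
    rw [← h1, hElog, hElog, ← h2]
    field_simp
  have key : ∀ t s, lamBar s ^ (1 - γ) *
          Real.exp (-(1 - γ) * ∫ u in t..s, (lamBar u - r u)) *
          Real.exp (-ρ * (s - t)) =
        E s * Real.exp (-(1 - γ) * Real.log (I t) - γ * Real.log (E t)) := by
    intro t s
    rw [intervalIntegral.integral_sub (hlamc.intervalIntegrable _ _)
      (hr.intervalIntegrable _ _), hlamint, Real.rpow_def_of_pos (hlampos s), hlamlog]
    conv_rhs => rw [← Real.exp_log (hEpos s)]
    rw [← Real.exp_add, ← Real.exp_add, ← Real.exp_add]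
    congr 1
    linear_combination hrint t s
  refine ⟨fun t _ => hlampos t, fun t _ => ?_, fun t _ => ?_⟩
  · simp only [key]
    exact (hEi t).mul_const _
  · simp only [key]
    rw [integral_mul_const]
    change lamBar t = (I t * _) ^ _
    rw [Real.rpow_def_of_pos (mul_pos (hIpos t) (Real.exp_pos _)),
      Real.log_mul (hIpos t).ne' (Real.exp_pos _).ne', Real.log_exp,
      ← Real.exp_log (hlampos t), hlamlog]
    congr 1
    field_simp
    ring
end

section
/- Let the interest rate r>0 and wage w≥0 be constant, let h be a discount function with h(t)>0 for all t and H := ∫₀^∞ h(s) ds < ∞, and let k₀ be such that k₀ + w/r > 0. Set c₀ := (k₀+w/r)/H, and define k(t) := (k₀ + w/r − c₀·∫₀^t h(s)ds)·e^{rt} − w/r and c(t) := c₀·h(t)·e^{rt}. Then: (i) k solves dk/dt = r·k(t) + w − c(t) with k(0)=k₀; and (ii) the optimal propensity to consume out of wealth, λ(t) := c(t)/(k(t)+w/r), equals h(t)·(∫ₜ^∞ h(s)ds)^{−1} for all t≥0; in particular λ(0) = 1/H, the constant equilibrium propensity. -/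
open MeasureTheory

/-- In the consumption–saving problem with logarithmic utility,
constant interest rate `r > 0` and constant wage `w ≥ 0`, the time-0 optimal
(pre-commitment) path `k(t) = (k₀ + w/r − c₀·∫₀^t h)·e^{rt} − w/r`,
`c(t) = c₀·h(t)·e^{rt}` with `c₀ = (k₀ + w/r)/H` satisfies the wealth dynamics, and
its propensity to consume out of wealth is `λ(t) = h(t)·(∫ₜ^∞ h)⁻¹`; in particular
`λ(0) = 1/H`, the constant equilibrium propensity. -/
theorem stmt8
    (r w k₀ : ℝ) (hr : 0 < r) (hw : 0 ≤ w)
    -- the discount function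
    (h : ℝ → ℝ) (hh : ContDiff ℝ 1 h) (hh0 : h 0 = 1)
    (hhpos : ∀ t ≥ (0 : ℝ), 0 < h t) (hh' : ∀ t ≥ (0 : ℝ), deriv h t ≤ 0)
    (hhlim : Filter.Tendsto h Filter.atTop (nhds 0))
    (hH : IntegrableOn h (Set.Ioi 0))
    (hk₀ : 0 < k₀ + w / r)
    (c₀ : ℝ) (hc₀ : c₀ = (k₀ + w / r) / ∫ s in Set.Ioi (0:ℝ), h s)
    (k c : ℝ → ℝ)
    (hk : ∀ t : ℝ,
      k t = (k₀ + w / r - c₀ * ∫ s in (0:ℝ)..t, h s) * Real.exp (r * t) - w / r)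
    (hc : ∀ t : ℝ, c t = c₀ * h t * Real.exp (r * t)) :
    -- (i) the wealth dynamics hold
    k 0 = k₀ ∧
    (∀ t ≥ (0 : ℝ), HasDerivAt k (r * k t + w - c t) t) ∧
    -- (ii) the optimal propensity to consume out of wealth
    (∀ t ≥ (0 : ℝ), c t / (k t + w / r) = h t * (∫ s in Set.Ioi t, h s)⁻¹) ∧
    c 0 / (k 0 + w / r) = (∫ s in Set.Ioi (0:ℝ), h s)⁻¹ := by
  have hcont : Continuous h := hh.continuous
  have hHpos : 0 < ∫ s in Set.Ioi (0:ℝ), h s := by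
    rw [setIntegral_pos_iff_support_of_nonneg_ae _ hH]
    · have hsub : Set.Ioi (0:ℝ) ⊆ Function.support h ∩ Set.Ioi 0 := fun x hx =>
        ⟨(hhpos x (le_of_lt hx)).ne', hx⟩
      refine lt_of_lt_of_le ?_ (measure_mono hsub)
      simp
    · filter_upwards [ae_restrict_mem measurableSet_Ioi] with x hx
      exact (hhpos x (le_of_lt hx)).le
  have hk0 : k 0 = k₀ := by rw [hk]; simp
  have hc0 : c₀ ≠ 0 := by rw [hc₀]; exact (div_pos hk₀ hHpos).ne'
  have hmul : k₀ + w / r = c₀ * ∫ s in Set.Ioi (0:ℝ), h s := by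
    rw [hc₀]; field_simp
  have hii : ∀ t ≥ (0 : ℝ), c t / (k t + w / r) = h t * (∫ s in Set.Ioi t, h s)⁻¹ := by
    intro t ht
    have hsplit : (∫ s in (0:ℝ)..t, h s) + ∫ s in Set.Ioi t, h s
        = ∫ s in Set.Ioi (0:ℝ), h s :=
      intervalIntegral.integral_interval_add_Ioi hH (hH.mono_set (Set.Ioi_subset_Ioi ht))
    have hden : k t + w / r = (c₀ * Real.exp (r * t)) * ∫ s in Set.Ioi t, h s := by
      rw [hk, hmul, ← hsplit]; ring
    have hne : c₀ * Real.exp (r * t) ≠ 0 := mul_ne_zero hc0 (Real.exp_ne_zero _)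
    have hnum : c t = (c₀ * Real.exp (r * t)) * h t := by rw [hc]; ring
    rw [hden, hnum, mul_div_mul_left _ _ hne, div_eq_mul_inv]
  refine ⟨hk0, ?_, hii, ?_⟩
  · intro t _
    have hI : HasDerivAt (fun u => ∫ s in (0:ℝ)..u, h s) (h t) t :=
      intervalIntegral.integral_hasDerivAt_right (hcont.intervalIntegrable _ _)
        hcont.stronglyMeasurable.stronglyMeasurableAtFilter hcont.continuousAt
    have hE : HasDerivAt (fun u => Real.exp (r * u)) (Real.exp (r * t) * (r * 1)) t :=
      ((hasDerivAt_id t).const_mul r).exp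
    have hD := (((hI.const_mul c₀).const_sub (k₀ + w / r)).mul hE).sub_const (w / r)
    have hkf : k = fun t => (k₀ + w / r - c₀ * ∫ s in (0:ℝ)..t, h s) * Real.exp (r * t) - w / r :=
      funext hk
    have hval : r * k t + w - c t = -(c₀ * h t) * Real.exp (r * t)
        + (k₀ + w / r - c₀ * ∫ s in (0:ℝ)..t, h s) * (Real.exp (r * t) * (r * 1)) := by
      have hrw : r * (w / r) = w := by field_simp
      rw [hk, hc]
      linear_combination -hrw
    rw [hval, hkf]
    exact hD
  · have := hii 0 le_rfl
    rw [this, hh0, one_mul]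
end

section
/- Let γ>1, 0<ρ₁<ρ₂, ω∈(0,1) and r>0, and define f(λ) := ω/(ρ₁+(λ−r)(1−γ)) + (1−ω)/(ρ₂+(λ−r)(1−γ)) − 1/λ for λ in the interval (0, r+ρ₁/(γ−1)). Then: (i) both denominators ρᵢ+(λ−r)(1−γ) are strictly positive on this interval; (ii) f is strictly increasing on (0, r+ρ₁/(γ−1)); (iii) f(λ)→−∞ as λ→0⁺ and f(λ)→+∞ as λ→(r+ρ₁/(γ−1))⁻; hence (iv) there exists a unique λ₁∈(0, r+ρ₁/(γ−1)) with f(λ₁)=0, and λ₁ satisfies the integrability conditions ρ₁+(λ₁−r)(1−γ)>0 and ρ₂+(λ₁−r)(1−γ)>0; moreover λ₁ is the unique positive solution of f(λ)=0 satisfying these two inequalities. -/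
open MeasureTheory

/-- For the mixture-of-exponentials discount function with
`γ > 1`, `0 < ρ₁ < ρ₂`, `ω ∈ (0,1)`, `r > 0`, the function
`f(λ) = ω/(ρ₁+(λ−r)(1−γ)) + (1−ω)/(ρ₂+(λ−r)(1−γ)) − 1/λ` has strictly positive
denominators on `(0, r+ρ₁/(γ−1))`, is strictly increasing there, tends to `−∞` at
`0⁺` and to `+∞` at the right endpoint; hence it has a unique zero `λ₁` there, which
satisfies the integrability conditions and is the unique positive solution of
`f(λ) = 0` satisfying them. -/
theorem stmt10
    (γ ρ₁ ρ₂ ω r : ℝ) (hγ : 1 < γ) (hρ₁ : 0 < ρ₁) (hρ : ρ₁ < ρ₂)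
    (hω : ω ∈ Set.Ioo (0:ℝ) 1) (hr : 0 < r)
    (f : ℝ → ℝ)
    (hf : ∀ lam : ℝ, f lam =
      ω / (ρ₁ + (lam - r) * (1 - γ)) + (1 - ω) / (ρ₂ + (lam - r) * (1 - γ)) - 1 / lam) :
    -- (i) the denominators are strictly positive on the interval
    (∀ lam ∈ Set.Ioo (0:ℝ) (r + ρ₁ / (γ - 1)),
      0 < ρ₁ + (lam - r) * (1 - γ) ∧ 0 < ρ₂ + (lam - r) * (1 - γ)) ∧
    -- (ii) `f` is strictly increasing on the interval
    StrictMonoOn f (Set.Ioo (0:ℝ) (r + ρ₁ / (γ - 1))) ∧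
    -- (iii) limits at the endpoints
    Filter.Tendsto f (nhdsWithin 0 (Set.Ioi 0)) Filter.atBot ∧
    Filter.Tendsto f
      (nhdsWithin (r + ρ₁ / (γ - 1)) (Set.Iio (r + ρ₁ / (γ - 1)))) Filter.atTop ∧
    -- (iv) existence and uniqueness of the zero `λ₁`
    ∃ lam₁ ∈ Set.Ioo (0:ℝ) (r + ρ₁ / (γ - 1)),
      f lam₁ = 0 ∧
      0 < ρ₁ + (lam₁ - r) * (1 - γ) ∧ 0 < ρ₂ + (lam₁ - r) * (1 - γ) ∧
      (∀ lam : ℝ, 0 < lam → f lam = 0 →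
        0 < ρ₁ + (lam - r) * (1 - γ) → 0 < ρ₂ + (lam - r) * (1 - γ) → lam = lam₁) := by
  obtain ⟨hω0, hω1⟩ := hω
  have hg : 0 < γ - 1 := by linarith
  obtain ⟨b, hb⟩ : ∃ b, b = r + ρ₁ / (γ - 1) := ⟨_, rfl⟩
  rw [← hb]
  have hb0 : 0 < b := by rw [hb]; positivity
  have key : ∀ x : ℝ, ρ₁ + (x - r) * (1 - γ) = (γ - 1) * (b - x) := by
    intro x
    rw [hb]
    field_simp
    ring
  have hi : ∀ x ∈ Set.Ioo (0:ℝ) b,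
      0 < ρ₁ + (x - r) * (1 - γ) ∧ 0 < ρ₂ + (x - r) * (1 - γ) := by
    intro x hx
    have h1 : 0 < ρ₁ + (x - r) * (1 - γ) := by
      rw [key]
      exact mul_pos hg (by linarith [hx.2])
    exact ⟨h1, by linarith⟩
  have hmono : StrictMonoOn f (Set.Ioo (0:ℝ) b) := by
    intro x hx y hy hxy
    rw [hf, hf]
    have hlt : (y - r) * (1 - γ) < (x - r) * (1 - γ) := by nlinarith
    have h1 : ω / (ρ₁ + (x - r) * (1 - γ)) < ω / (ρ₁ + (y - r) * (1 - γ)) :=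
      div_lt_div_of_pos_left hω0 (hi y hy).1 (by linarith)
    have h2 : (1 - ω) / (ρ₂ + (x - r) * (1 - γ)) < (1 - ω) / (ρ₂ + (y - r) * (1 - γ)) :=
      div_lt_div_of_pos_left (by linarith) (hi y hy).2 (by linarith)
    have h3 : 1 / y < 1 / x := div_lt_div_of_pos_left one_pos hx.1 hxy
    linarith
  have hfe : f = fun x => ω / (ρ₁ + (x - r) * (1 - γ)) +
      (1 - ω) / (ρ₂ + (x - r) * (1 - γ)) - 1 / x := funext hf
  have hbot : Filter.Tendsto f (nhdsWithin 0 (Set.Ioi 0)) Filter.atBot := by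
    have hc : ContinuousAt (fun x : ℝ => ω / (ρ₁ + (x - r) * (1 - γ)) +
        (1 - ω) / (ρ₂ + (x - r) * (1 - γ))) 0 := by
      have h1 : ρ₁ + (0 - r) * (1 - γ) ≠ 0 := by
        rw [key]
        exact (mul_pos hg (by linarith)).ne'
      have h2 : ρ₂ + (0 - r) * (1 - γ) ≠ 0 := by nlinarith
      fun_prop (disch := assumption)
    have hinv : Filter.Tendsto (fun x : ℝ => -(1 / x)) (nhdsWithin 0 (Set.Ioi 0))
        Filter.atBot := by
      simp only [one_div]
      exact Filter.tendsto_neg_atTop_atBot.comp tendsto_inv_nhdsGT_zero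
    rw [hfe]
    refine ((hc.tendsto.mono_left nhdsWithin_le_nhds).add_atBot hinv).congr fun x => ?_
    exact (sub_eq_add_neg _ _).symm
  have htop : Filter.Tendsto f (nhdsWithin b (Set.Iio b)) Filter.atTop := by
    have hc : ContinuousAt (fun x : ℝ =>
        (1 - ω) / (ρ₂ + (x - r) * (1 - γ)) - 1 / x) b := by
      have h2 : ρ₂ + (b - r) * (1 - γ) ≠ 0 := by
        have := key b
        rw [sub_self, mul_zero] at this
        intro h
        linarith
      have h3 := hb0.ne'
      fun_prop (disch := assumption)
    have hden : Filter.Tendsto (fun x : ℝ => ρ₁ + (x - r) * (1 - γ))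
        (nhdsWithin b (Set.Iio b)) (nhdsWithin 0 (Set.Ioi 0)) := by
      apply tendsto_nhdsWithin_of_tendsto_nhds_of_eventually_within
      · have h : ContinuousAt (fun x : ℝ => ρ₁ + (x - r) * (1 - γ)) b := by fun_prop
        have h' := h.tendsto.mono_left (nhdsWithin_le_nhds (s := Set.Iio b))
        have h0 := key b
        rw [sub_self, mul_zero] at h0
        rwa [h0] at h'
      · filter_upwards [self_mem_nhdsWithin] with x hx
        rw [key]
        exact mul_pos hg (sub_pos.mpr hx)
    have h1 : Filter.Tendsto (fun x : ℝ => ω / (ρ₁ + (x - r) * (1 - γ)))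
        (nhdsWithin b (Set.Iio b)) Filter.atTop := by
      simp only [div_eq_mul_inv]
      exact (tendsto_inv_nhdsGT_zero.comp hden).const_mul_atTop hω0
    rw [hfe]
    simp only [add_sub_assoc (_ / _)]
    exact h1.atTop_add (hc.tendsto.mono_left nhdsWithin_le_nhds)
  refine ⟨hi, hmono, hbot, htop, ?_⟩
  have hcont : ContinuousOn f (Set.Ioo (0:ℝ) b) := by
    intro x hx
    apply ContinuousAt.continuousWithinAt
    have h1 := (hi x hx).1.ne'
    have h2 := (hi x hx).2.ne'
    have h3 := hx.1.ne'
    rw [hfe]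
    fun_prop (disch := assumption)
  have hsurj : Set.univ ⊆ f '' Set.Ioo (0:ℝ) b := by
    have hl : nhdsWithin (0:ℝ) (Set.Ioi 0) ≤ Filter.principal (Set.Ioo 0 b) :=
      Filter.le_principal_iff.mpr (Ioo_mem_nhdsGT hb0)
    have hu : nhdsWithin b (Set.Iio b) ≤ Filter.principal (Set.Ioo 0 b) :=
      Filter.le_principal_iff.mpr (Ioo_mem_nhdsLT hb0)
    exact isPreconnected_Ioo.intermediate_value_Iii hl hu hcont hbot htop
  obtain ⟨z, hz, hz0⟩ := hsurj (Set.mem_univ 0)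
  refine ⟨z, hz, hz0, (hi z hz).1, (hi z hz).2, ?_⟩
  intro x hx hx0 h1 _
  rw [key] at h1
  have hxb : x < b := sub_pos.mp (pos_of_mul_pos_right h1 hg.le)
  exact hmono.injOn ⟨hx, hxb⟩ hz (hx0.trans hz0.symm)
end

section
/- Let γ>1, 0<ρ₁<ρ₂, ω∈(0,1), r>0, let f and λ₁ be as in the mixture-of-exponentials setup, and set λ̲ := r+(ρ₁−r)/γ and λ̄ := r+(ρ₀−r)/γ with ρ₀ := ωρ₁+(1−ω)ρ₂. Then: (i) λ̲ > 0, λ̲ lies in the interval (0, r+ρ₁/(γ−1)), f(λ̲) < 0, and therefore λ̲ < λ₁; (ii) if moreover r = (ω/ρ₁ + (1−ω)/ρ₂)^{−1} (the harmonic mean of ρ₁ and ρ₂ with weights ω, 1−ω), then λ₁ = r and λ̲ < λ₁ < λ̄. -/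
open MeasureTheory

/-- In the mixture-of-exponentials setup with `γ > 1`,
`0 < ρ₁ < ρ₂`, `ω ∈ (0,1)`, `r > 0`, let `λ₁` be the unique zero of `f` in
`(0, r+ρ₁/(γ−1))`, and set `λ̲ = r+(ρ₁−r)/γ`, `λ̄ = r+(ρ₀−r)/γ` with
`ρ₀ = ωρ₁+(1−ω)ρ₂`.  Then `λ̲ > 0`, `λ̲` lies in the interval, `f(λ̲) < 0`, hence
`λ̲ < λ₁`; and if `r` equals the weighted harmonic mean `(ω/ρ₁+(1−ω)/ρ₂)⁻¹`, then
`λ₁ = r` and `λ̲ < λ₁ < λ̄`. -/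
theorem stmt11
    (γ ρ₁ ρ₂ ω r : ℝ) (hγ : 1 < γ) (hρ₁ : 0 < ρ₁) (hρ : ρ₁ < ρ₂)
    (hω : ω ∈ Set.Ioo (0:ℝ) 1) (hr : 0 < r)
    (f : ℝ → ℝ)
    (hf : ∀ lam : ℝ, f lam =
      ω / (ρ₁ + (lam - r) * (1 - γ)) + (1 - ω) / (ρ₂ + (lam - r) * (1 - γ)) - 1 / lam)
    (lam₁ : ℝ) (hlam₁ : lam₁ ∈ Set.Ioo (0:ℝ) (r + ρ₁ / (γ - 1))) (hflam₁ : f lam₁ = 0)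
    (huniq : ∀ lam ∈ Set.Ioo (0:ℝ) (r + ρ₁ / (γ - 1)), f lam = 0 → lam = lam₁) :
    -- (i)
    0 < r + (ρ₁ - r) / γ ∧
    r + (ρ₁ - r) / γ ∈ Set.Ioo (0:ℝ) (r + ρ₁ / (γ - 1)) ∧
    f (r + (ρ₁ - r) / γ) < 0 ∧
    r + (ρ₁ - r) / γ < lam₁ ∧
    -- (ii)
    (r = (ω / ρ₁ + (1 - ω) / ρ₂)⁻¹ →
      lam₁ = r ∧ r + (ρ₁ - r) / γ < lam₁ ∧
        lam₁ < r + ((ω * ρ₁ + (1 - ω) * ρ₂) - r) / γ) := by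
  obtain ⟨hω0, hω1⟩ := hω
  have hγ0 : 0 < γ := by linarith
  have hg : 0 < γ - 1 := by linarith
  obtain ⟨L, hL⟩ : ∃ L, L = r + (ρ₁ - r) / γ := ⟨_, rfl⟩
  rw [← hL]
  have hLγ : γ * L = γ * r + (ρ₁ - r) := by rw [hL]; field_simp
  have key : ∀ lam : ℝ, 0 < lam → lam ≤ L → f lam < 0 := by
    intro lam h0 hle
    have hD1 : lam ≤ ρ₁ + (lam - r) * (1 - γ) := by nlinarith
    have hD2 : ρ₁ + (lam - r) * (1 - γ) < ρ₂ + (lam - r) * (1 - γ) := by linarith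
    rw [hf]
    generalize ρ₁ + (lam - r) * (1 - γ) = D1 at *
    generalize ρ₂ + (lam - r) * (1 - γ) = D2 at *
    have h1 : ω / D1 ≤ ω / lam := div_le_div_of_nonneg_left hω0.le h0 hD1
    have h2 : (1 - ω) / D2 < (1 - ω) / lam :=
      div_lt_div_of_pos_left (by linarith) h0 (by linarith)
    have h3 : ω / lam + (1 - ω) / lam = 1 / lam := by rw [← add_div]; congr 1; ring
    linarith
  have hL0 : 0 < L := by
    by_contra h
    push Not at h
    nlinarith [mul_pos hg hr]
  have hLr : L < r + ρ₁ / (γ - 1) := by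
    have h1 : ρ₁ / γ < ρ₁ / (γ - 1) := div_lt_div_of_pos_left hρ₁ hg (by linarith)
    have h2 : (ρ₁ - r) / γ < ρ₁ / γ := div_lt_div_of_pos_right (by linarith) hγ0
    linarith
  have hlt : L < lam₁ := by
    by_contra h
    have := key lam₁ hlam₁.1 (not_lt.mp h)
    linarith
  refine ⟨hL0, ⟨hL0, hLr⟩, key L hL0 le_rfl, hlt, ?_⟩
  intro hrr
  have hρ₂ : 0 < ρ₂ := by linarith
  have hr1 : lam₁ = r := by
    symm
    apply huniq r ⟨hr, by linarith [div_pos hρ₁ hg]⟩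
    rw [hf]
    have : 1 / r = ω / ρ₁ + (1 - ω) / ρ₂ := by rw [hrr, one_div, inv_inv]
    rw [this]; simp
  refine ⟨hr1, hlt, ?_⟩
  rw [hr1]
  have hω' : 0 < 1 - ω := by linarith
  have h1 : r * (ω / ρ₁ + (1 - ω) / ρ₂) = 1 := by
    have hp : 0 < ω / ρ₁ + (1 - ω) / ρ₂ := by positivity
    conv_lhs => rw [hrr]
    exact inv_mul_cancel₀ hp.ne'
  have h2 : 1 < (ω * ρ₁ + (1 - ω) * ρ₂) * (ω / ρ₁ + (1 - ω) / ρ₂) := by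
    have : (ω * ρ₁ + (1 - ω) * ρ₂) * (ω / ρ₁ + (1 - ω) / ρ₂)
        = 1 + ω * (1 - ω) * (ρ₂ - ρ₁) ^ 2 / (ρ₁ * ρ₂) := by
      field_simp; ring
    rw [this]
    have hd : 0 < ρ₂ - ρ₁ := by linarith
    have : 0 < ω * (1 - ω) * (ρ₂ - ρ₁) ^ 2 / (ρ₁ * ρ₂) := by positivity
    linarith
  have h3 : r < ω * ρ₁ + (1 - ω) * ρ₂ :=
    lt_of_mul_lt_mul_right (h1.trans_lt h2) (by positivity)
  have := div_pos (sub_pos.mpr h3) hγ0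
  linarith
end

section
/- Let 0<γ<1, δ∈(0,1), τ>0, and ρ̃ := ρ − r(1−γ) > 0, and define f(λ) := γ − (1−δ)·e^{−(ρ̃+λ(1−γ))τ} − ρ̃/λ for λ>0. Then f is strictly increasing on (0,∞), f(λ)→−∞ as λ→0⁺, and f(λ)→γ as λ→∞; hence there exists a unique λ₂>0 with f(λ₂)=0, and λ₂ automatically satisfies the integrability condition ρ̃ + λ₂(1−γ) > 0. -/
open MeasureTheory

/-- For the quasi-hyperbolic discount function with `0 < γ < 1`,
`δ ∈ (0,1)`, `τ > 0` and `ρ̃ := ρ − r(1−γ) > 0`, the function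
`f(λ) = γ − (1−δ)·e^{−(ρ̃+λ(1−γ))τ} − ρ̃/λ` is strictly increasing on `(0,∞)`,
tends to `−∞` as `λ → 0⁺` and to `γ` as `λ → ∞`; hence there is a unique `λ₂ > 0`
with `f(λ₂) = 0`, and it automatically satisfies the integrability condition
`ρ̃ + λ₂(1−γ) > 0`. -/
theorem stmt12
    (γ δ τ ρ r : ℝ) (hγ0 : 0 < γ) (hγ1 : γ < 1)
    (hδ : δ ∈ Set.Ioo (0:ℝ) 1) (hτ : 0 < τ)
    (hρt : 0 < ρ - r * (1 - γ))
    (f : ℝ → ℝ)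
    (hf : ∀ lam : ℝ, f lam =
      γ - (1 - δ) * Real.exp (-((ρ - r * (1 - γ)) + lam * (1 - γ)) * τ)
        - (ρ - r * (1 - γ)) / lam) :
    StrictMonoOn f (Set.Ioi 0) ∧
    Filter.Tendsto f (nhdsWithin 0 (Set.Ioi 0)) Filter.atBot ∧
    Filter.Tendsto f Filter.atTop (nhds γ) ∧
    ∃ lam₂ : ℝ, 0 < lam₂ ∧ f lam₂ = 0 ∧
      0 < (ρ - r * (1 - γ)) + lam₂ * (1 - γ) ∧
      ∀ lam : ℝ, 0 < lam → f lam = 0 → lam = lam₂ := by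
  obtain ⟨hδ0, hδ1⟩ := hδ
  have hg : 0 < 1 - γ := by linarith
  have hd : 0 < 1 - δ := by linarith
  generalize ρ - r * (1 - γ) = p at hρt hf ⊢
  have hfe : f = fun lam => γ - (1 - δ) * Real.exp (-(p + lam * (1 - γ)) * τ) - p / lam :=
    funext hf
  have hmono : StrictMonoOn f (Set.Ioi 0) := by
    intro a ha b hb hab
    rw [Set.mem_Ioi] at ha hb
    rw [hf, hf]
    have h1 : p / b < p / a := div_lt_div_of_pos_left hρt ha hab
    have h2 : Real.exp (-(p + b * (1 - γ)) * τ) < Real.exp (-(p + a * (1 - γ)) * τ) := by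
      apply Real.exp_lt_exp.mpr
      have h3 : a * (1 - γ) < b * (1 - γ) := mul_lt_mul_of_pos_right hab hg
      exact mul_lt_mul_of_pos_right (by linarith) hτ
    have h4 := mul_lt_mul_of_pos_left h2 hd
    linarith
  have hbot : Filter.Tendsto f (nhdsWithin 0 (Set.Ioi 0)) Filter.atBot := by
    have h1 : Filter.Tendsto (fun lam : ℝ => p * lam⁻¹) (nhdsWithin 0 (Set.Ioi 0))
        Filter.atTop := Filter.Tendsto.const_mul_atTop hρt tendsto_inv_nhdsGT_zero
    have h2 : Filter.Tendsto (fun lam : ℝ => γ + -(p * lam⁻¹)) (nhdsWithin 0 (Set.Ioi 0))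
        Filter.atBot :=
      Filter.tendsto_atBot_add_const_left _ γ (Filter.tendsto_neg_atTop_atBot.comp h1)
    refine Filter.tendsto_atBot_mono (fun lam => ?_) h2
    rw [hf, div_eq_mul_inv]
    have := mul_pos hd (Real.exp_pos (-(p + lam * (1 - γ)) * τ))
    linarith
  have htop : Filter.Tendsto f Filter.atTop (nhds γ) := by
    have h1 : Filter.Tendsto (fun lam : ℝ => p / lam) Filter.atTop (nhds 0) :=
      Filter.Tendsto.const_div_atTop Filter.tendsto_id p
    have h2 : Filter.Tendsto (fun lam : ℝ => (p + lam * (1 - γ)) * τ) Filter.atTop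
        Filter.atTop :=
      (Filter.tendsto_atTop_add_const_left _ p
        (Filter.tendsto_id.atTop_mul_const hg)).atTop_mul_const hτ
    have h3 := (Real.tendsto_exp_neg_atTop_nhds_zero.comp h2).const_mul (1 - δ)
    have h4 := (h3.const_sub γ).sub h1
    rw [hfe]
    simp only [neg_mul]
    simpa [Function.comp_def] using h4
  have hcont : ContinuousOn f (Set.Ioi 0) := by
    rw [hfe]
    refine ContinuousOn.sub (Continuous.continuousOn (by fun_prop)) ?_
    exact continuousOn_const.div continuousOn_id (fun x hx => ne_of_gt hx)
  refine ⟨hmono, hbot, htop, ?_⟩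
  obtain ⟨a, ha, ha0⟩ := ((hbot.eventually (Filter.eventually_lt_atBot 0)).and
    self_mem_nhdsWithin).exists
  obtain ⟨b, hb, hab⟩ := ((htop.eventually (lt_mem_nhds hγ0)).and
    (Filter.eventually_ge_atTop a)).exists
  obtain ⟨c, hc, hc0⟩ := intermediate_value_Icc hab
    (hcont.mono (fun x hx => lt_of_lt_of_le ha0 hx.1)) ⟨ha.le, hb.le⟩
  have hcp : 0 < c := lt_of_lt_of_le ha0 hc.1
  refine ⟨c, hcp, hc0, by positivity, fun x hx hx0 => ?_⟩
  exact hmono.injOn hx hcp (hx0.trans hc0.symm)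
end

section
/- Let γ>1, δ∈(0,1), τ>0, and ρ̃ := ρ − r(1−γ) > 0, and define f(λ) := γ − (1−δ)·e^{−(ρ̃+λ(1−γ))τ} − ρ̃/λ for λ>0. Then f(λ)→−∞ as λ→0⁺ and f(ρ̃/(γ−1)) = δ > 0; hence there exists at least one λ₂ ∈ (0, ρ̃/(γ−1)) with f(λ₂)=0, and any such λ₂ satisfies the integrability condition ρ̃ + λ₂(1−γ) > 0. -/
open MeasureTheory

/-- For the quasi-hyperbolic discount function with `γ > 1`,
`δ ∈ (0,1)`, `τ > 0` and `ρ̃ := ρ − r(1−γ) > 0`, the function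
`f(λ) = γ − (1−δ)·e^{−(ρ̃+λ(1−γ))τ} − ρ̃/λ` tends to `−∞` as `λ → 0⁺` and satisfies
`f(ρ̃/(γ−1)) = δ > 0`; hence there is at least one `λ₂ ∈ (0, ρ̃/(γ−1))` with
`f(λ₂) = 0`, and any such `λ₂` satisfies the integrability condition
`ρ̃ + λ₂(1−γ) > 0`. -/
theorem stmt13
    (γ δ τ ρ r : ℝ) (hγ : 1 < γ)
    (hδ : δ ∈ Set.Ioo (0:ℝ) 1) (hτ : 0 < τ)
    (hρt : 0 < ρ - r * (1 - γ))
    (f : ℝ → ℝ)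
    (hf : ∀ lam : ℝ, f lam =
      γ - (1 - δ) * Real.exp (-((ρ - r * (1 - γ)) + lam * (1 - γ)) * τ)
        - (ρ - r * (1 - γ)) / lam) :
    Filter.Tendsto f (nhdsWithin 0 (Set.Ioi 0)) Filter.atBot ∧
    f ((ρ - r * (1 - γ)) / (γ - 1)) = δ ∧
    (0:ℝ) < δ ∧
    (∃ lam₂ ∈ Set.Ioo (0:ℝ) ((ρ - r * (1 - γ)) / (γ - 1)), f lam₂ = 0) ∧
    ∀ lam₂ ∈ Set.Ioo (0:ℝ) ((ρ - r * (1 - γ)) / (γ - 1)), f lam₂ = 0 →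
      0 < (ρ - r * (1 - γ)) + lam₂ * (1 - γ) := by
  obtain ⟨hδ0, hδ1⟩ := hδ
  generalize ρ - r * (1 - γ) = A at *
  have hg : 0 < γ - 1 := by linarith
  have hlim : Filter.Tendsto f (nhdsWithin 0 (Set.Ioi 0)) Filter.atBot := by
    have h1 : Filter.Tendsto (fun x : ℝ => A * x⁻¹) (nhdsWithin 0 (Set.Ioi 0)) Filter.atTop :=
      tendsto_inv_nhdsGT_zero.const_mul_atTop hρt
    have h2 : Filter.Tendsto (fun x : ℝ => γ + -(A * x⁻¹)) (nhdsWithin 0 (Set.Ioi 0))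
        Filter.atBot :=
      Filter.tendsto_atBot_add_const_left _ _ (Filter.tendsto_neg_atTop_atBot.comp h1)
    refine Filter.tendsto_atBot_mono (fun x => ?_) h2
    rw [hf, div_eq_mul_inv]
    have := mul_pos (sub_pos.2 hδ1) (Real.exp_pos (-(A + x * (1 - γ)) * τ))
    linarith
  have hval : f (A / (γ - 1)) = δ := by
    rw [hf]
    have e1 : -(A + A / (γ - 1) * (1 - γ)) * τ = 0 := by
      field_simp
      ring
    have e2 : A / (A / (γ - 1)) = γ - 1 := by
      field_simp
    rw [e1, e2, Real.exp_zero]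
    ring
  have hb : 0 < A / (γ - 1) := div_pos hρt hg
  refine ⟨hlim, hval, hδ0, ?_, ?_⟩
  · obtain ⟨a, ha, ha0, hab⟩ :=
      ((hlim.eventually (Filter.eventually_lt_atBot 0)).and (Ioo_mem_nhdsGT hb)).exists
    have hc : ContinuousOn f (Set.Icc a (A / (γ - 1))) := by
      rw [funext hf]
      refine ContinuousOn.sub (by fun_prop) (continuousOn_const.div continuousOn_id ?_)
      intro x hx
      exact (lt_of_lt_of_le ha0 hx.1).ne'
    obtain ⟨x, hx, hx0⟩ := intermediate_value_Ioo hab.le hc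
      (show (0:ℝ) ∈ Set.Ioo (f a) (f (A / (γ - 1))) from ⟨ha, by rw [hval]; exact hδ0⟩)
    exact ⟨x, ⟨ha0.trans hx.1, hx.2⟩, hx0⟩
  · intro x hx _
    have := (lt_div_iff₀ hg).1 hx.2
    linarith
end

section
/- Let δ∈(0,1), ρ̃ := ρ − r(1−γ) > 0, and γ>0 with δ+γ−1>0. Suppose that for each τ>0, λ(τ)>0 satisfies the quasi-hyperbolic fixed-point equation γ − (1−δ)·e^{−(ρ̃+λ(τ)(1−γ))τ} − ρ̃/λ(τ) = 0, and that λ(τ) converges to some limit L∈(0,∞) as τ→0⁺. Then L = ρ̃/(δ+γ−1) = (ρ + r(γ−1))/(δ+γ−1); this limit is the constant propensity to consume in the instant-gratification model of Harris and Laibson, and when γ>1 it satisfies the integrability condition ρ̃ + L(1−γ) > 0. -/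
open MeasureTheory

/-- In the quasi-hyperbolic model, suppose for each commitment span
`τ > 0` the propensity `λ(τ) > 0` solves the fixed-point equation
`γ − (1−δ)·e^{−(ρ̃+λ(τ)(1−γ))τ} − ρ̃/λ(τ) = 0` (with `ρ̃ = ρ − r(1−γ) > 0`), and
`λ(τ) → L ∈ (0,∞)` as `τ → 0⁺`.  Then `L = ρ̃/(δ+γ−1) = (ρ+r(γ−1))/(δ+γ−1)` — the
instant-gratification propensity of Harris and Laibson — and for `γ > 1` it satisfies
the integrability condition `ρ̃ + L(1−γ) > 0`. -/
theorem stmt14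
    (γ δ ρ r : ℝ) (hδ : δ ∈ Set.Ioo (0:ℝ) 1) (hγ : 0 < γ)
    (hρt : 0 < ρ - r * (1 - γ)) (hδγ : 0 < δ + γ - 1)
    (lam : ℝ → ℝ) (L : ℝ) (hL0 : 0 < L)
    (hlam : ∀ τ > (0:ℝ), 0 < lam τ ∧
      γ - (1 - δ) * Real.exp (-((ρ - r * (1 - γ)) + lam τ * (1 - γ)) * τ)
        - (ρ - r * (1 - γ)) / lam τ = 0)
    (hconv : Filter.Tendsto lam (nhdsWithin 0 (Set.Ioi 0)) (nhds L)) :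
    L = (ρ - r * (1 - γ)) / (δ + γ - 1) ∧
    L = (ρ + r * (γ - 1)) / (δ + γ - 1) ∧
    (1 < γ → 0 < (ρ - r * (1 - γ)) + L * (1 - γ)) := by
  have hτ : Filter.Tendsto (fun τ : ℝ => τ) (nhdsWithin 0 (Set.Ioi 0)) (nhds 0) :=
    Filter.tendsto_id.mono_left nhdsWithin_le_nhds
  have hexp : Filter.Tendsto
      (fun τ => Real.exp (-((ρ - r * (1 - γ)) + lam τ * (1 - γ)) * τ))
      (nhdsWithin 0 (Set.Ioi 0))
      (nhds (Real.exp (-((ρ - r * (1 - γ)) + L * (1 - γ)) * 0))) :=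
    (Real.continuous_exp.tendsto _).comp
      (((hconv.mul_const (1 - γ)).const_add (ρ - r * (1 - γ))).neg.mul hτ)
  have hlim := ((hexp.const_mul (1 - δ)).const_sub γ).sub
    ((tendsto_const_nhds (x := ρ - r * (1 - γ))).div hconv hL0.ne')
  have hzero : Filter.Tendsto (fun _ : ℝ => (0:ℝ)) (nhdsWithin 0 (Set.Ioi 0)) (nhds 0) :=
    tendsto_const_nhds
  have heq := tendsto_nhds_unique_of_eventuallyEq hlim hzero (by
    filter_upwards [self_mem_nhdsWithin] with τ h
    exact (hlam τ h).2)
  rw [mul_zero, Real.exp_zero] at heq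
  have key : L * (δ + γ - 1) = ρ - r * (1 - γ) := by
    have h2 : (ρ - r * (1 - γ)) / L = δ + γ - 1 := by linarith
    rw [div_eq_iff hL0.ne'] at h2
    linarith
  refine ⟨?_, ?_, ?_⟩
  · rw [eq_div_iff hδγ.ne']; exact key
  · rw [eq_div_iff hδγ.ne']; linarith
  · intro _
    have := mul_pos hL0 hδ.1
    nlinarith
end

section
/- Let γ>1, ρ>0, r>0, and α,β>0 with β≤α (so that ∫₀^∞ (1+αs)^{−β/α} ds = +∞), and define f(λ) := ∫₀^∞ (1+αs)^{−β/α}·e^{−(ρ+(λ−r)(1−γ))s} ds − 1/λ for λ in the interval (0, r+ρ/(γ−1)), on which the exponent ρ+(λ−r)(1−γ) is strictly positive so the integral converges. Then f is strictly increasing on this interval, f(λ)→−∞ as λ→0⁺ and f(λ)→+∞ as λ→(r+ρ/(γ−1))⁻; hence there exists a unique λ₃ ∈ (0, r+ρ/(γ−1)) with f(λ₃)=0, and λ₃ satisfies the integrability condition ρ + (λ₃−r)(1−γ) > 0. -/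
open MeasureTheory

lemma aux_le_one {α p s : ℝ} (hα : 0 < α) (hp : 0 < p) (hs : 0 < s) :
    (1 + α * s) ^ (-p) ≤ 1 :=
  Real.rpow_le_one_of_one_le_of_nonpos (by nlinarith [mul_pos hα hs]) (by linarith)

lemma aux_meas (α p k : ℝ) :
    AEStronglyMeasurable (fun s : ℝ => (1 + α * s) ^ (-p) * Real.exp (-k * s))
      (volume.restrict (Set.Ioi 0)) := by
  apply Measurable.aestronglyMeasurable
  fun_prop

lemma aux_bound {α p k m s : ℝ} (hα : 0 < α) (hp : 0 < p) (hs : 0 < s) (hm : m ≤ k) :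
    ‖(1 + α * s) ^ (-p) * Real.exp (-k * s)‖ ≤ Real.exp (-m * s) := by
  have h1 : 0 < 1 + α * s := by positivity
  rw [Real.norm_of_nonneg (by positivity)]
  have h2 := aux_le_one hα hp hs
  calc _ ≤ 1 * Real.exp (-k * s) := by gcongr
    _ ≤ _ := by
      rw [one_mul]
      apply Real.exp_le_exp.2
      nlinarith

lemma aux_int {α p k : ℝ} (hα : 0 < α) (hp : 0 < p) (hk : 0 < k) :
    IntegrableOn (fun s : ℝ => (1 + α * s) ^ (-p) * Real.exp (-k * s)) (Set.Ioi 0) := by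
  refine Integrable.mono' (exp_neg_integrableOn_Ioi 0 hk) (aux_meas α p k) ?_
  filter_upwards [ae_restrict_mem measurableSet_Ioi] with s hs
  exact aux_bound hα hp hs le_rfl

lemma aux_anti {α p k m : ℝ} (hα : 0 < α) (hp : 0 < p) (hm : 0 < m) (hk : m ≤ k) :
    (∫ s in Set.Ioi (0:ℝ), (1 + α * s) ^ (-p) * Real.exp (-k * s)) ≤
    ∫ s in Set.Ioi (0:ℝ), (1 + α * s) ^ (-p) * Real.exp (-m * s) := by
  refine setIntegral_mono_on (aux_int hα hp (hm.trans_le hk)) (aux_int hα hp hm)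
    measurableSet_Ioi ?_
  intro s hs
  have hs' : 0 < s := hs
  have h1 : 0 < 1 + α * s := by positivity
  have : Real.exp (-k * s) ≤ Real.exp (-m * s) := Real.exp_le_exp.2 (by nlinarith)
  gcongr

lemma aux_cont {α p k : ℝ} (hα : 0 < α) (hp : 0 < p) (hk : 0 < k) :
    ContinuousAt (fun k : ℝ =>
      ∫ s in Set.Ioi (0:ℝ), (1 + α * s) ^ (-p) * Real.exp (-k * s)) k := by
  refine continuousAt_of_dominated (bound := fun s => Real.exp (-(k / 2) * s))
    (Filter.Eventually.of_forall fun k => aux_meas α p k) ?_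
    (exp_neg_integrableOn_Ioi 0 (half_pos hk)) ?_
  · filter_upwards [lt_mem_nhds (half_lt_self hk)] with x hx
    filter_upwards [ae_restrict_mem measurableSet_Ioi] with s hs
    exact aux_bound hα hp hs hx.le
  · refine Filter.Eventually.of_forall fun s => ?_
    fun_prop

lemma aux_lower {α p k : ℝ} (hα : 0 < α) (hp : 0 < p) (hp1 : p ≤ 1) (hk : 0 < k) :
    Real.exp (-1) * (Real.log (1 + α * k⁻¹) / α) ≤
    ∫ s in Set.Ioi (0:ℝ), (1 + α * s) ^ (-p) * Real.exp (-k * s) := by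
  have hk' : 0 ≤ k⁻¹ := by positivity
  have hpos : ∀ s ∈ Set.uIcc 0 k⁻¹, 0 < 1 + α * s := by
    intro s hs
    rw [Set.uIcc_of_le hk'] at hs
    have := hs.1
    positivity
  have hci : IntervalIntegrable (fun s : ℝ => Real.exp (-1) * (1 + α * s)⁻¹) volume 0 k⁻¹ := by
    apply ContinuousOn.intervalIntegrable
    refine continuousOn_const.mul (ContinuousOn.inv₀ (by fun_prop) ?_)
    intro s hs
    exact (hpos s hs).ne'
  have e : ∫ s in (0:ℝ)..k⁻¹, Real.exp (-1) * (1 + α * s)⁻¹ =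
      Real.exp (-1) * (Real.log (1 + α * k⁻¹) / α) := by
    rw [intervalIntegral.integral_eq_sub_of_hasDerivAt
      (f := fun s => Real.exp (-1) * (Real.log (1 + α * s) / α)) _ hci]
    · simp
    · intro s hs
      have h := hpos s hs
      have h1 : HasDerivAt (fun s : ℝ => 1 + α * s) α s := by
        simpa using ((hasDerivAt_id s).const_mul α).const_add 1
      have h2 := ((h1.log h.ne').div_const α).const_mul (Real.exp (-1))
      have h3 : α / (1 + α * s) / α = (1 + α * s)⁻¹ := by
        have := h.ne'
        field_simp
      rw [h3] at h2
      exact h2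
  rw [← e, intervalIntegral.integral_of_le hk']
  rw [intervalIntegrable_iff_integrableOn_Ioc_of_le hk'] at hci
  have hI := aux_int hα hp hk
  calc _ ≤ ∫ s in Set.Ioc (0:ℝ) k⁻¹, (1 + α * s) ^ (-p) * Real.exp (-k * s) := by
        refine setIntegral_mono_on hci (hI.mono_set Set.Ioc_subset_Ioi_self)
          measurableSet_Ioc ?_
        intro s hs
        have h0 := hs.1
        have h : 1 ≤ 1 + α * s := by nlinarith [mul_pos hα h0]
        have hks : k * s ≤ 1 := by
          have := mul_le_mul_of_nonneg_left hs.2 hk.le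
          rwa [mul_inv_cancel₀ hk.ne'] at this
        rw [mul_comm, ← Real.rpow_neg_one]
        have a1 : (1 + α * s) ^ (-1 : ℝ) ≤ (1 + α * s) ^ (-p) :=
          Real.rpow_le_rpow_of_exponent_le h (by linarith)
        have a2 : Real.exp (-1) ≤ Real.exp (-k * s) := Real.exp_le_exp.2 (by linarith)
        gcongr
    _ ≤ _ := by
        refine setIntegral_mono_set hI ?_ Set.Ioc_subset_Ioi_self.eventuallyLE
        filter_upwards [ae_restrict_mem measurableSet_Ioi] with s hs
        have hs' : 0 < s := hs
        have h1 : 0 < 1 + α * s := by positivity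
        show (0:ℝ) ≤ _
        positivity

lemma aux_top {α p : ℝ} (hα : 0 < α) (hp : 0 < p) (hp1 : p ≤ 1) :
    Filter.Tendsto (fun k : ℝ =>
      ∫ s in Set.Ioi (0:ℝ), (1 + α * s) ^ (-p) * Real.exp (-k * s))
      (nhdsWithin 0 (Set.Ioi 0)) Filter.atTop := by
  have h : Filter.Tendsto (fun k : ℝ => Real.exp (-1) * (Real.log (1 + α * k⁻¹) / α))
      (nhdsWithin 0 (Set.Ioi 0)) Filter.atTop := by
    refine Filter.Tendsto.const_mul_atTop (Real.exp_pos _) ?_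
    refine Filter.Tendsto.atTop_div_const hα ?_
    refine Real.tendsto_log_atTop.comp ?_
    refine Filter.tendsto_atTop_add_const_left _ _ ?_
    exact Filter.Tendsto.const_mul_atTop hα tendsto_inv_nhdsGT_zero
  refine Filter.tendsto_atTop_mono' _ ?_ h
  filter_upwards [self_mem_nhdsWithin] with k hk
  exact aux_lower hα hp hp1 hk

/-- For the generalized hyperbolic discount function
`h(s) = (1+αs)^{−β/α}·e^{−ρs}` with `γ > 1`, `ρ > 0`, `r > 0`, `α, β > 0`, `β ≤ α`,
the function `f(λ) = ∫₀^∞ (1+αs)^{−β/α}·e^{−(ρ+(λ−r)(1−γ))s} ds − 1/λ` is well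
defined (the exponent is positive, so the integral converges) and strictly increasing
on `(0, r+ρ/(γ−1))`, tends to `−∞` at `0⁺` and to `+∞` at the right endpoint; hence
it has a unique zero `λ₃` there, satisfying the integrability condition
`ρ + (λ₃−r)(1−γ) > 0`. -/
theorem stmt15
    (γ ρ r α β : ℝ) (hγ : 1 < γ) (hρ : 0 < ρ) (hr : 0 < r)
    (hα : 0 < α) (hβ : 0 < β) (hβα : β ≤ α)
    (f : ℝ → ℝ)
    (hf : ∀ lam : ℝ, f lam =
      (∫ s in Set.Ioi (0:ℝ),
        (1 + α * s) ^ (-(β / α)) * Real.exp (-(ρ + (lam - r) * (1 - γ)) * s)) - 1 / lam) :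
    -- positivity of the exponent and convergence of the integral on the interval
    (∀ lam ∈ Set.Ioo (0:ℝ) (r + ρ / (γ - 1)),
      0 < ρ + (lam - r) * (1 - γ) ∧
      IntegrableOn
        (fun s => (1 + α * s) ^ (-(β / α)) * Real.exp (-(ρ + (lam - r) * (1 - γ)) * s))
        (Set.Ioi 0)) ∧
    -- `f` is strictly increasing on the interval
    StrictMonoOn f (Set.Ioo (0:ℝ) (r + ρ / (γ - 1))) ∧
    -- limits at the endpoints
    Filter.Tendsto f (nhdsWithin 0 (Set.Ioi 0)) Filter.atBot ∧
    Filter.Tendsto f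
      (nhdsWithin (r + ρ / (γ - 1)) (Set.Iio (r + ρ / (γ - 1)))) Filter.atTop ∧
    -- existence and uniqueness of the zero `λ₃`
    ∃ lam₃ ∈ Set.Ioo (0:ℝ) (r + ρ / (γ - 1)),
      f lam₃ = 0 ∧ 0 < ρ + (lam₃ - r) * (1 - γ) ∧
      ∀ lam ∈ Set.Ioo (0:ℝ) (r + ρ / (γ - 1)), f lam = 0 → lam = lam₃ := by
  have hg : 0 < γ - 1 := by linarith
  have hp : 0 < β / α := by positivity
  have hp1 : β / α ≤ 1 := (div_le_one hα).2 hβα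
  set M := r + ρ / (γ - 1) with hM
  have hMpos : 0 < M := by positivity
  have hk : ∀ lam, ρ + (lam - r) * (1 - γ) = (γ - 1) * (M - lam) := by
    intro lam
    rw [hM]
    field_simp
    ring
  have hkpos : ∀ lam, lam < M → 0 < ρ + (lam - r) * (1 - γ) := by
    intro lam h
    rw [hk]
    exact mul_pos hg (by linarith)
  have hmono : StrictMonoOn f (Set.Ioo 0 M) := by
    intro a ha b hb hab
    rw [hf, hf]
    have h1 : 1 / b < 1 / a := one_div_lt_one_div_of_lt ha.1 hab
    have h2 := aux_anti hα hp (hkpos b hb.2)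
      (show ρ + (b - r) * (1 - γ) ≤ ρ + (a - r) * (1 - γ) by nlinarith)
    linarith
  have hbot : Filter.Tendsto f (nhdsWithin 0 (Set.Ioi 0)) Filter.atBot := by
    have h : Filter.Tendsto (fun lam : ℝ => (∫ s in Set.Ioi (0:ℝ),
        (1 + α * s) ^ (-(β / α)) * Real.exp (-(ρ + (M / 2 - r) * (1 - γ)) * s)) + -lam⁻¹)
        (nhdsWithin 0 (Set.Ioi 0)) Filter.atBot :=
      Filter.tendsto_atBot_add_const_left _ _
        (Filter.tendsto_neg_atTop_atBot.comp tendsto_inv_nhdsGT_zero)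
    refine Filter.tendsto_atBot_mono' _ ?_ h
    filter_upwards [Ioo_mem_nhdsGT (half_pos hMpos)] with a ha
    rw [hf]
    have h2 := aux_anti hα hp (hkpos (M / 2) (half_lt_self hMpos))
      (show ρ + (M / 2 - r) * (1 - γ) ≤ ρ + (a - r) * (1 - γ) by nlinarith [ha.2])
    rw [one_div]
    linarith
  have hcont : ContinuousOn f (Set.Ioo 0 M) := by
    intro a ha
    apply ContinuousAt.continuousWithinAt
    rw [funext hf]
    refine ContinuousAt.sub ?_ ?_
    · exact ContinuousAt.comp (f := fun lam : ℝ => ρ + (lam - r) * (1 - γ))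
        (aux_cont hα hp (hkpos a ha.2)) (by fun_prop)
    · exact continuousAt_const.div continuousAt_id ha.1.ne'
  have htop : Filter.Tendsto f (nhdsWithin M (Set.Iio M)) Filter.atTop := by
    have h0 : Filter.Tendsto (fun lam : ℝ => ρ + (lam - r) * (1 - γ))
        (nhdsWithin M (Set.Iio M)) (nhdsWithin 0 (Set.Ioi 0)) := by
      refine tendsto_nhdsWithin_of_tendsto_nhds_of_eventually_within _ ?_ ?_
      · have hc : ContinuousAt (fun lam : ℝ => ρ + (lam - r) * (1 - γ)) M := by fun_prop
        have := hc.tendsto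
        rw [hk M, sub_self, mul_zero] at this
        exact this.mono_left nhdsWithin_le_nhds
      · filter_upwards [self_mem_nhdsWithin] with a ha
        exact hkpos a ha
    have h1 := Filter.tendsto_atTop_add_const_right _ (-(1 / (M / 2)))
      ((aux_top hα hp hp1).comp h0)
    refine Filter.tendsto_atTop_mono' _ ?_ h1
    filter_upwards [Ioo_mem_nhdsLT (half_lt_self hMpos)] with a ha
    rw [hf]
    have : 1 / a ≤ 1 / (M / 2) := one_div_le_one_div_of_le (half_pos hMpos) ha.1.le
    simp only [Function.comp]
    linarith
  refine ⟨fun lam h => ⟨hkpos lam h.2, aux_int hα hp (hkpos lam h.2)⟩, hmono, hbot, htop, ?_⟩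
  obtain ⟨x, hx, hx0⟩ := isPreconnected_Ioo.intermediate_value_Iii
    (Filter.le_principal_iff.2 (Ioo_mem_nhdsGT hMpos))
    (Filter.le_principal_iff.2 (Ioo_mem_nhdsLT hMpos)) hcont hbot htop (Set.mem_univ (0:ℝ))
  exact ⟨x, hx, hx0, hkpos x hx.2, fun y hy hy0 => hmono.injOn hy hx (hy0.trans hx0.symm)⟩
end

section
/- Let ρ>0 and T>0, and suppose α and c are real numbers with α ≥ c > 0 and α·∫₀^T e^{(c−ρ−α)t} dt = 1 (this is equation (51) for the truncated exponential discount h(t)=e^{−ρt} for 0≤t≤T and h(t)=0 for t>T, with c playing the role of f′(k̄)). Then: (i) c−ρ−α ≤ −ρ < 0; (ii) (c−ρ)·e^{−(c−ρ)T} = α·e^{−αT}; (iii) 0 < c−ρ < 1/T, i.e. ρ < c < ρ + 1/T; and (iv) α > c−ρ, so that α·T = φ((c−ρ)·T), where φ is the second (decreasing) branch of the equation x·e^{−x} = y·e^{−y}. -/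
open MeasureTheory

theorem aux_branch (u v : ℝ) (hu : 0 < u) (huv : u < v)
    (h : u * Real.exp (-u) = v * Real.exp (-v)) : u < 1 ∧ 1 < v := by
  have e1 : v = u * Real.exp (v - u) := by
    have : Real.exp (v - u) = Real.exp v * Real.exp (-u) := by rw [← Real.exp_add]; ring_nf
    have h2 : Real.exp v * Real.exp (-v) = 1 := by rw [← Real.exp_add]; simp
    rw [this]
    linear_combination (-v) * h2 - Real.exp v * h
  have e2 : u = v * Real.exp (u - v) := by
    have : Real.exp (u - v) = Real.exp u * Real.exp (-v) := by rw [← Real.exp_add]; ring_nf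
    have h2 : Real.exp u * Real.exp (-u) = 1 := by rw [← Real.exp_add]; simp
    rw [this]
    linear_combination (-u) * h2 + Real.exp u * h
  have a1 := Real.add_one_lt_exp (sub_ne_zero.mpr huv.ne')
  have a2 := Real.add_one_lt_exp (sub_ne_zero.mpr huv.ne)
  have b1 := mul_lt_mul_of_pos_left a1 hu
  have b2 := mul_lt_mul_of_pos_left a2 (hu.trans huv)
  rw [← e1] at b1
  rw [← e2] at b2
  constructor <;> nlinarith

/-- For the truncated exponential discount
(`h(t) = e^{−ρt}` for `0 ≤ t ≤ T`, `h(t) = 0` for `t > T`), if `α ≥ c > 0` and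
`α·∫₀^T e^{(c−ρ−α)t} dt = 1` (equation (51) with `c = f′(k̄)`), then
(i) `c−ρ−α ≤ −ρ < 0`; (ii) `(c−ρ)·e^{−(c−ρ)T} = α·e^{−αT}`;
(iii) `0 < c−ρ < 1/T`; and (iv) `α > c−ρ`, so `αT = φ((c−ρ)T)` for the second,
decreasing branch `φ` of `x·e^{−x} = y·e^{−y}`. -/
theorem stmt17
    (ρ T α c : ℝ) (hρ : 0 < ρ) (hT : 0 < T)
    (hαc : c ≤ α) (hc : 0 < c)
    (heq : α * ∫ t in (0:ℝ)..T, Real.exp ((c - ρ - α) * t) = 1) :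
    -- (i)
    c - ρ - α ≤ -ρ ∧
    -- (ii)
    (c - ρ) * Real.exp (-(c - ρ) * T) = α * Real.exp (-α * T) ∧
    -- (iii)
    0 < c - ρ ∧ c - ρ < 1 / T ∧
    -- (iv)
    c - ρ < α ∧
    (∀ φ : ℝ → ℝ, StrictAntiOn φ (Set.Ioi 0) → φ 1 = 1 →
      (∀ x > (0:ℝ), 0 < φ x ∧
        φ x * Real.exp (-φ x) = x * Real.exp (-x) ∧ (x ≠ 1 → φ x ≠ x)) →
      α * T = φ ((c - ρ) * T)) := by
  have hδ : c - ρ - α ≠ 0 := by linarith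
  have hα : 0 < α := by linarith
  rw [intervalIntegral.integral_comp_mul_left (fun t => Real.exp t) hδ, integral_exp] at heq
  have key : α * Real.exp ((c - ρ - α) * T) = c - ρ := by
    simp only [mul_zero, Real.exp_zero, smul_eq_mul] at heq
    field_simp at heq
    linarith
  have hb : 0 < c - ρ := by rw [← key]; positivity
  have h2 : (c - ρ) * Real.exp (-(c - ρ) * T) = α * Real.exp (-α * T) := by
    nth_rewrite 1 [← key]
    rw [mul_assoc, ← Real.exp_add]
    ring_nf
  have hx : 0 < (c - ρ) * T := by positivity
  have hxy : (c - ρ) * T < α * T := mul_lt_mul_of_pos_right (by linarith) hT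
  have h3 : (c - ρ) * T * Real.exp (-((c - ρ) * T)) = α * T * Real.exp (-(α * T)) := by
    rw [← neg_mul, ← neg_mul]
    linear_combination T * h2
  obtain ⟨k1, k2⟩ := aux_branch _ _ hx hxy h3
  refine ⟨by linarith, h2, hb, by rwa [lt_div_iff₀ hT], by linarith, ?_⟩
  intro φ _ _ hφ
  obtain ⟨p1, p2, p3⟩ := hφ _ hx
  have p4 : 1 < φ ((c - ρ) * T) := by
    rcases lt_or_gt_of_ne (p3 k1.ne) with h | h
    · have := (aux_branch _ _ p1 h p2).2
      linarith
    · exact (aux_branch _ _ hx h p2.symm).2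
  rcases lt_trichotomy (α * T) (φ ((c - ρ) * T)) with h | h | h
  · have := (aux_branch _ _ (by linarith) h (h3.symm.trans p2.symm)).1
    linarith
  · exact h
  · have := (aux_branch _ _ p1 h (p2.trans h3)).1
    linarith
end

section
/- Let 0<ρ₁≤ρ₂ and let h:[0,∞)→ℝ be a measurable function satisfying e^{−ρ₂t} ≤ h(t) ≤ e^{−ρ₁t} for all t≥0. Suppose α>0 and c∈ℝ are such that the function t ↦ h(t)·e^{(c−α)t} is integrable on [0,∞) and α·∫₀^∞ h(t)·e^{(c−α)t} dt = 1. Then ρ₁ ≤ c ≤ ρ₂. -/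
open MeasureTheory

/-- If the discount function is squeezed between two exponentials,
`e^{−ρ₂t} ≤ h(t) ≤ e^{−ρ₁t}` with `0 < ρ₁ ≤ ρ₂`, and `α > 0`, `c` satisfy
equation (51): `α·∫₀^∞ h(t)·e^{(c−α)t} dt = 1` (the integrand being integrable),
then `ρ₁ ≤ c ≤ ρ₂`. -/
theorem stmt19
    (ρ₁ ρ₂ : ℝ) (hρ₁ : 0 < ρ₁) (hρ : ρ₁ ≤ ρ₂)
    (h : ℝ → ℝ) (hmeas : Measurable h)
    (hbound : ∀ t ≥ (0 : ℝ),
      Real.exp (-ρ₂ * t) ≤ h t ∧ h t ≤ Real.exp (-ρ₁ * t))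
    (α c : ℝ) (hα : 0 < α)
    (hint : IntegrableOn (fun t => h t * Real.exp ((c - α) * t)) (Set.Ioi 0))
    (heq : α * ∫ t in Set.Ioi (0:ℝ), h t * Real.exp ((c - α) * t) = 1) :
    ρ₁ ≤ c ∧ c ≤ ρ₂ := by
  set I := ∫ t in Set.Ioi (0:ℝ), h t * Real.exp ((c - α) * t) with hI
  constructor
  · by_contra! hc
    have hb : c - α - ρ₁ < 0 := by linarith
    have hle : I ≤ ∫ t in Set.Ioi (0:ℝ), Real.exp ((c - α - ρ₁) * t) := by
      refine setIntegral_mono_on hint (integrableOn_exp_mul_Ioi hb 0) measurableSet_Ioi ?_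
      intro t ht
      have ht' : (0:ℝ) < t := ht
      have h1 := mul_le_mul_of_nonneg_right (hbound t ht'.le).2 (Real.exp_pos ((c - α) * t)).le
      rw [← Real.exp_add] at h1
      convert h1 using 2
      ring
    rw [integral_exp_mul_Ioi hb, mul_zero, Real.exp_zero, le_div_iff_of_neg hb] at hle
    have hIpos : 0 < I := by
      by_contra! hn
      nlinarith
    nlinarith
  · by_contra! hc
    obtain ⟨b, hb, hbα, hba⟩ : ∃ b : ℝ, b < 0 ∧ -α < b ∧ b ≤ c - α - ρ₂ :=
      ⟨min (c - α - ρ₂) (-α / 2), lt_of_le_of_lt (min_le_right _ _) (by linarith),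
        lt_min (by linarith) (by linarith), min_le_left _ _⟩
    have hle : (∫ t in Set.Ioi (0:ℝ), Real.exp (b * t)) ≤ I := by
      refine setIntegral_mono_on (integrableOn_exp_mul_Ioi hb 0) hint measurableSet_Ioi ?_
      intro t ht
      have ht' : (0:ℝ) < t := ht
      have h1 := mul_le_mul_of_nonneg_right (hbound t ht'.le).1 (Real.exp_pos ((c - α) * t)).le
      rw [← Real.exp_add] at h1
      refine le_trans (Real.exp_le_exp.mpr ?_) h1
      nlinarith
    rw [integral_exp_mul_Ioi hb, mul_zero, Real.exp_zero, div_le_iff_of_neg hb] at hle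
    have hIpos : 0 < I := by
      by_contra! hn
      nlinarith
    nlinarith
end
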